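/- Let φ_j, φ_k : ℝⁿ → ℝ be smooth ℤⁿ-periodic eigenfunctions with the same eigenvalue: Δφ_j = −λ²φ_j and Δφ_k = −λ²φ_k for some λ > 0. Then ∫_{N_{φ_j}} φ_k(x) ‖∇φ_j(x)‖ dμH^{n−1}(x) = 0. -/

import Mathlib

/-!
Write `φ = φj`, `ψ = φk`. The heart of the proof is a flux formula for an arbitrary smooth `φ`
(`nodalMass_eq`): for every nonnegative compactly supported `C¹` weight `w`,
`∫_{φ = 0} w ‖∇φ‖ dμH = c · (-∫_{φ > 0} div (w ∇φ))`, where `c` is the ratio of `μH[m]` to Lebesgue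
measure on `ℝᵐ` and `m = n - 1`. It turns the singular surface integral into a volume integral.

*Flux formula, regular part.* Near a zero with `∇φ ≠ 0` the zero set is a graph of slope at most `κ`
over the hyperplane `eᗮ`, `e = ∇φ / ‖∇φ‖`. The orthogonal projection is bi-Lipschitz on it with
constants tending to `1`, so Hausdorff measure on the graph is compared with Lebesgue measure on
`eᗮ`, and Fubini along the direction `e` identifies the resulting integral with a flux
(`graph_flux_compare`). Replacing `w ∇φ` by a multiple of `e` costs nothing because the difference is
tangent to the level sets (`integral_divg_pos_eq_zero`). A partition of unity and `κ → 0` give the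
formula for weights supported where `∇φ ≠ 0` (`regular_flux_eq`).

*Flux formula, critical points.* The weight is multiplied by a cutoff of `{‖∇φ‖² > 1/k}` and
`k → ∞`. The surface side converges monotonically. On the volume side the error is controlled by
`∇‖∇φ‖² · ∇φ = O(‖∇φ‖²)`, and the critical set contributes nothing since almost everywhere on it the
second derivatives of `φ` vanish too (`ae_pd_eq_zero_of_eq_zero`). No structure theory of nodal sets
is needed.

*Conclusion.* Take `w = χ ψ` with a compactly supported `χ` whose lattice translates sum to `1` near
`Q`. The flux of `χ φ ∇ψ` through `{φ = 0}` vanishes, so it may be subtracted, and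
`X = ψ ∇φ - φ ∇ψ` is divergence free because the eigenvalues agree. There remains
`∫_{φ > 0} ∇χ · X`, which by periodicity unfolds to an integral over `Q` against
`∇ ∑ₖ χ(· + k) = 0`. Unfolding the surface integral in the same way gives the claim.
-/

open MeasureTheory Real Set

noncomputable section

/-- The Euclidean Laplacian `Δφ = Σᵢ ∂²φ/∂xᵢ²`. -/
def lap {n : ℕ} (φ : EuclideanSpace ℝ (Fin n) → ℝ) (x : EuclideanSpace ℝ (Fin n)) : ℝ :=
  ∑ i : Fin n,
    fderiv ℝ (fun y => fderiv ℝ φ y (EuclideanSpace.single i 1)) x (EuclideanSpace.single i 1)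

/-- `ℤⁿ`-periodicity of a function on `ℝⁿ`. -/
def ZPeriodic {n : ℕ} (φ : EuclideanSpace ℝ (Fin n) → ℝ) : Prop :=
  ∀ (x : EuclideanSpace ℝ (Fin n)) (k : Fin n → ℤ),
    φ (x + (WithLp.equiv 2 (Fin n → ℝ)).symm fun i => (k i : ℝ)) = φ x

/-- The fundamental domain `Q = [0,1)ⁿ`. -/
def Qcube (n : ℕ) : Set (EuclideanSpace ℝ (Fin n)) :=
  {x | ∀ i, x i ∈ Set.Ico (0 : ℝ) 1}

open Filter Topology
open scoped ENNReal NNReal ContDiff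

/-! ### Partial derivatives and divergence -/

/-- The `i`-th partial derivative `∂f/∂xᵢ`. -/
def pd {n : ℕ} (i : Fin n) (f : EuclideanSpace ℝ (Fin n) → ℝ) (x : EuclideanSpace ℝ (Fin n)) : ℝ :=
  fderiv ℝ f x (EuclideanSpace.single i 1)

/-- The divergence `∑ᵢ ∂Fᵢ/∂xᵢ` of a vector field given by its components. -/
def divg {n : ℕ} (F : Fin n → EuclideanSpace ℝ (Fin n) → ℝ) (x : EuclideanSpace ℝ (Fin n)) : ℝ :=
  ∑ i, pd i (F i) x

section Calculus

variable {n : ℕ} {f g : EuclideanSpace ℝ (Fin n) → ℝ}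

lemma pd_contDiff (hf : ContDiff ℝ ∞ f) (i : Fin n) : ContDiff ℝ ∞ (pd i f) := by
  unfold pd
  exact (hf.fderiv_right (m := ∞) (by simp)).clm_apply contDiff_const

lemma pd_continuous (hf : ContDiff ℝ 1 f) (i : Fin n) : Continuous (pd i f) := by
  unfold pd
  exact (hf.continuous_fderiv (by simp)).clm_apply continuous_const

lemma pd_mul (hf : ContDiff ℝ 1 f) (hg : ContDiff ℝ 1 g) (i : Fin n) (x) :
    pd i (fun y => f y * g y) x = f x * pd i g x + g x * pd i f x := by
  unfold pd
  rw [fderiv_fun_mul (hf.differentiable (by simp) x) (hg.differentiable (by simp) x)]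
  simp

lemma pd_sum {ι : Type*} (s : Finset ι) {F : ι → EuclideanSpace ℝ (Fin n) → ℝ}
    (hF : ∀ j ∈ s, ContDiff ℝ 1 (F j)) (i : Fin n) (x) :
    pd i (fun y => ∑ j ∈ s, F j y) x = ∑ j ∈ s, pd i (F j) x := by
  unfold pd
  rw [fderiv_fun_sum (fun j hj => (hF j hj).differentiable (by simp) x)]
  simp

lemma pd_comp {s : ℝ → ℝ} (hs : ContDiff ℝ 1 s) (hf : ContDiff ℝ 1 f) (i : Fin n) (x) :
    pd i (fun y => s (f y)) x = deriv s (f x) * pd i f x := by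
  unfold pd
  have h := ((hs.differentiable (by simp) (f x)).hasDerivAt.comp_hasFDerivAt x
    (hf.differentiable (by simp) x).hasFDerivAt).fderiv
  change fderiv ℝ (s ∘ f) x _ = _
  rw [h]; simp

lemma pd_hasCompactSupport (hf : HasCompactSupport f) (i : Fin n) : HasCompactSupport (pd i f) :=
  hf.fderiv_apply ℝ _

lemma pd_integrable (hf : ContDiff ℝ 1 f) (hc : HasCompactSupport f) (i : Fin n) :
    Integrable (pd i f) :=
  (pd_continuous hf i).integrable_of_hasCompactSupport (pd_hasCompactSupport hc i)

lemma integral_pd_eq_zero (hf : ContDiff ℝ 1 f) (hc : HasCompactSupport f) (i : Fin n) :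
    ∫ x, pd i f x = 0 := by
  have h := integral_mul_fderiv_eq_neg_fderiv_mul_of_integrable (𝕜 := ℝ)
    (μ := (volume : Measure (EuclideanSpace ℝ (Fin n))))
    (f := fun _ => (1 : ℝ)) (g := f) (v := EuclideanSpace.single i 1) (by simp)
    (by simpa using (pd_integrable hf hc i : Integrable fun x => fderiv ℝ f x _))
    (by simpa using hf.continuous.integrable_of_hasCompactSupport hc)
    (fun _ _ => by simp) (fun x _ => hf.differentiable (by simp) x)
  simpa [pd] using h

lemma fderiv_eq_sum_pd (x v : EuclideanSpace ℝ (Fin n)) :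
    fderiv ℝ f x v = ∑ i, v i * pd i f x := by
  unfold pd
  conv_lhs => rw [show v = ∑ i, v i • (EuclideanSpace.single i (1 : ℝ)) by
    simpa using ((EuclideanSpace.basisFun (Fin n) ℝ).sum_repr v).symm]
  simp

lemma gradient_apply_eq_pd (x : EuclideanSpace ℝ (Fin n)) (i : Fin n) :
    gradient f x i = pd i f x := by
  have h : inner ℝ (gradient f x) (EuclideanSpace.single i (1 : ℝ)) = pd i f x := by
    unfold pd gradient
    exact InnerProductSpace.toDual_symm_apply
  rw [← h, real_inner_comm, EuclideanSpace.inner_single_left]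
  simp

lemma norm_gradient_sq (x : EuclideanSpace ℝ (Fin n)) :
    ‖gradient f x‖ ^ 2 = ∑ i, pd i f x ^ 2 := by
  rw [EuclideanSpace.norm_sq_eq]
  simp [gradient_apply_eq_pd]

lemma continuous_gradient (hf : ContDiff ℝ 1 f) : Continuous (gradient f) := by
  unfold gradient
  exact (InnerProductSpace.toDual ℝ _).symm.continuous.comp (hf.continuous_fderiv (by simp))

lemma divg_mul {F : Fin n → EuclideanSpace ℝ (Fin n) → ℝ} (hf : ContDiff ℝ 1 f)
    (hF : ∀ i, ContDiff ℝ 1 (F i)) (x) :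
    divg (fun i y => f y * F i y) x = f x * divg F x + ∑ i, F i x * pd i f x := by
  unfold divg
  simp_rw [pd_mul hf (hF _), Finset.sum_add_distrib, Finset.mul_sum]

lemma divg_integrable {F : Fin n → EuclideanSpace ℝ (Fin n) → ℝ}
    (hF : ∀ i, ContDiff ℝ 1 (F i)) (hc : ∀ i, HasCompactSupport (F i)) :
    Integrable (divg F) :=
  integrable_finsetSum _ fun i _ => pd_integrable (hF i) (hc i) i

lemma divg_continuous {F : Fin n → EuclideanSpace ℝ (Fin n) → ℝ}
    (hF : ∀ i, ContDiff ℝ 1 (F i)) : Continuous (divg F) :=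
  continuous_finsetSum _ fun i _ => pd_continuous (hF i) i

/-- Integration by parts of a compactly supported field against a function of `f`. -/
lemma integral_comp_mul_divg {s : ℝ → ℝ} (hs : ContDiff ℝ 1 s) (hf : ContDiff ℝ 1 f)
    {F : Fin n → EuclideanSpace ℝ (Fin n) → ℝ}
    (hF : ∀ i, ContDiff ℝ 1 (F i)) (hc : ∀ i, HasCompactSupport (F i)) :
    ∫ x, s (f x) * divg F x = - ∫ x, deriv s (f x) * ∑ i, F i x * pd i f x := by
  have hsf : ContDiff ℝ 1 (fun x => s (f x)) := hs.comp hf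
  have h0 : ∫ x, divg (fun i y => s (f y) * F i y) x = 0 := by
    unfold divg
    rw [integral_finsetSum _ fun i _ => pd_integrable (hsf.mul (hF i)) ((hc i).mul_left) i]
    exact Finset.sum_eq_zero fun i _ => integral_pd_eq_zero (hsf.mul (hF i)) ((hc i).mul_left) i
  simp_rw [divg_mul hsf hF, pd_comp hs hf] at h0
  have e : ∀ x, ∑ i, F i x * (deriv s (f x) * pd i f x)
      = deriv s (f x) * ∑ i, F i x * pd i f x := fun x => by
    rw [Finset.mul_sum]; exact Finset.sum_congr rfl fun i _ => by ring
  simp_rw [e] at h0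
  rw [integral_add] at h0
  · linarith
  · refine ((hsf.continuous).mul (divg_continuous hF)).integrable_of_hasCompactSupport ?_
    have : HasCompactSupport (divg F) := by
      have := (HasCompactSupport.zero (α := EuclideanSpace ℝ (Fin n)) (β := ℝ))
      unfold divg
      classical
      refine Finset.induction_on (Finset.univ : Finset (Fin n)) ?_ ?_
      · simpa [Pi.zero_def] using this
      · intro a t ha ih
        simp_rw [Finset.sum_insert ha]
        exact (pd_hasCompactSupport (hc a) a).add ih
    exact this.mul_left
  · have hd : Continuous fun x => deriv s (f x) := (hs.continuous_deriv (by simp)).comp hf.continuous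
    simp_rw [Finset.mul_sum]
    refine integrable_finsetSum _ fun i _ => ?_
    exact (hd.mul ((hF i).continuous.mul (pd_continuous hf i))).integrable_of_hasCompactSupport
      ((hc i).mul_right.mul_left)

end Calculus

/-! ### Smooth cutoffs of level and critical sets -/

lemma smoothTransition_contDiff_one : ContDiff ℝ 1 smoothTransition :=
  (smoothTransition.contDiff (n := 1))

lemma deriv_smoothTransition_of_nonpos {t : ℝ} (ht : t ≤ 0) : deriv smoothTransition t = 0 := by
  refine IsLocalMin.deriv_eq_zero (Eventually.of_forall fun y => ?_)
  rw [smoothTransition.zero_of_nonpos ht]; exact smoothTransition.nonneg y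

lemma deriv_smoothTransition_of_one_le {t : ℝ} (ht : 1 ≤ t) : deriv smoothTransition t = 0 := by
  refine IsLocalMax.deriv_eq_zero (Eventually.of_forall fun y => ?_)
  rw [smoothTransition.one_of_one_le ht]; exact smoothTransition.le_one y

lemma exists_bound_deriv_smoothTransition :
    ∃ C, 0 ≤ C ∧ ∀ t : ℝ, |(t + 1) * deriv smoothTransition t| ≤ C ∧
      |t * deriv smoothTransition t| ≤ C := by
  obtain ⟨C, hC⟩ := isCompact_Icc.exists_bound_of_continuousOn (s := Icc (0 : ℝ) 1)
    (f := deriv smoothTransition)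
    (smoothTransition_contDiff_one.continuous_deriv (by simp)).continuousOn
  have hC0 : 0 ≤ C := (norm_nonneg _).trans (hC 0 (by simp))
  refine ⟨2 * C, by positivity, fun t => ?_⟩
  rcases le_total t 0 with h | h
  · simp [deriv_smoothTransition_of_nonpos h, hC0]
  rcases le_total 1 t with h' | h'
  · simp [deriv_smoothTransition_of_one_le h', hC0]
  · have := hC t ⟨h, h'⟩
    rw [norm_eq_abs] at this
    rw [abs_mul, abs_mul, abs_of_nonneg h, abs_of_nonneg (by linarith : 0 ≤ t + 1)]
    constructor <;> nlinarith [abs_nonneg (deriv smoothTransition t)]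

lemma deriv_smoothTransition_comp (a b t : ℝ) :
    deriv (fun t => smoothTransition (a * t - b)) t = a * deriv smoothTransition (a * t - b) := by
  have h1 : HasDerivAt (fun t : ℝ => a * t - b) a t := by
    simpa using ((hasDerivAt_id t).const_mul a).sub_const b
  have h2 := (smoothTransition_contDiff_one.differentiable (by simp) (a * t - b)).hasDerivAt
  have := (h2.comp t h1).deriv
  simp only [Function.comp_def] at this
  rw [this]; ring

lemma contDiff_smoothTransition_comp (a b : ℝ) :
    ContDiff ℝ 1 (fun t => smoothTransition (a * t - b)) :=
  smoothTransition_contDiff_one.comp ((contDiff_const.mul contDiff_id).sub contDiff_const)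

/-- With `s` the smooth transition, `s(kt - b)` converges to the indicator of `t > 0`, for `b ≥ 0`. -/
lemma tendsto_smoothTransition_mul (b : ℝ) (hb : 0 ≤ b) (t : ℝ) :
    Tendsto (fun k : ℕ => smoothTransition ((k : ℝ) * t - b)) atTop
      (𝓝 (if 0 < t then 1 else 0)) := by
  refine tendsto_const_nhds.congr' ?_
  split_ifs with h
  · obtain ⟨K, hK⟩ := exists_nat_ge ((1 + b) / t)
    filter_upwards [eventually_ge_atTop K] with k hk
    rw [smoothTransition.one_of_one_le]
    have h1 : (1 + b) / t ≤ k := hK.trans (by exact_mod_cast hk)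
    rw [div_le_iff₀ h] at h1
    linarith
  · refine Eventually.of_forall fun k => ?_
    dsimp only
    rw [smoothTransition.zero_of_nonpos]
    have : (k : ℝ) * t ≤ 0 := mul_nonpos_of_nonneg_of_nonpos (by positivity) (not_lt.1 h)
    linarith

/-- With `s` the smooth transition, `t · d/dt s(kt - b) → 0` for `b ≥ 0`. -/
lemma tendsto_deriv_smoothTransition_mul (b : ℝ) (hb : 0 ≤ b) (t : ℝ) :
    Tendsto (fun k : ℕ => (k : ℝ) * t * deriv smoothTransition ((k : ℝ) * t - b)) atTop
      (𝓝 0) := by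
  refine tendsto_const_nhds.congr' ?_
  by_cases h : 0 < t
  · obtain ⟨K, hK⟩ := exists_nat_ge ((1 + b) / t)
    filter_upwards [eventually_ge_atTop K] with k hk
    rw [deriv_smoothTransition_of_one_le, mul_zero]
    have h1 : (1 + b) / t ≤ k := hK.trans (by exact_mod_cast hk)
    rw [div_le_iff₀ h] at h1
    linarith
  · refine Eventually.of_forall fun k => ?_
    dsimp only
    rw [deriv_smoothTransition_of_nonpos, mul_zero]
    have : (k : ℝ) * t ≤ 0 := mul_nonpos_of_nonneg_of_nonpos (by positivity) (not_lt.1 h)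
    linarith

section Cutoff

variable {n : ℕ} {f g : EuclideanSpace ℝ (Fin n) → ℝ}

lemma tendsto_integral_cutoff (hf : Continuous f) (hg : Integrable g) (b : ℝ) (hb : 0 ≤ b) :
    Tendsto (fun k : ℕ => ∫ x, smoothTransition ((k : ℝ) * f x - b) * g x) atTop
      (𝓝 (∫ x in {x | 0 < f x}, g x)) := by
  have hm : MeasurableSet {x | 0 < f x} := (isOpen_lt continuous_const hf).measurableSet
  rw [← integral_indicator hm]
  refine tendsto_integral_of_dominated_convergence (fun x => ‖g x‖) (fun k => ?_) hg.norm
    (fun k => Eventually.of_forall fun x => ?_) (Eventually.of_forall fun x => ?_)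
  · exact (smoothTransition.continuous.comp (by fun_prop :
      Continuous fun x => (k : ℝ) * f x - b)).aestronglyMeasurable.mul hg.aestronglyMeasurable
  · rw [norm_mul, norm_eq_abs, abs_of_nonneg (smoothTransition.nonneg _)]
    exact mul_le_of_le_one_left (norm_nonneg _) (smoothTransition.le_one _)
  · have := (tendsto_smoothTransition_mul b hb (f x)).mul_const (g x)
    simpa [indicator_apply] using this

/-- A compactly supported field whose flux through the level sets of `f` is divisible by `f`
has no flux through `∂{f > 0}`: the integral of its divergence over `{f > 0}` vanishes. -/
lemma integral_divg_pos_eq_zero (hf : ContDiff ℝ 1 f)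
    {F : Fin n → EuclideanSpace ℝ (Fin n) → ℝ}
    (hF : ∀ i, ContDiff ℝ 1 (F i)) (hc : ∀ i, HasCompactSupport (F i))
    (hg : Integrable g) (hFg : ∀ x, ∑ i, F i x * pd i f x = f x * g x) :
    ∫ x in {x | 0 < f x}, divg F x = 0 := by
  have h1 := tendsto_integral_cutoff hf.continuous (divg_integrable hF hc) 0 le_rfl
  refine tendsto_nhds_unique h1 ?_
  obtain ⟨C, hC0, hC⟩ := exists_bound_deriv_smoothTransition
  have e : ∀ k : ℕ, ∫ x, smoothTransition ((k : ℝ) * f x - 0) * divg F x =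
      - ∫ x, (k : ℝ) * f x * deriv smoothTransition ((k : ℝ) * f x - 0) * g x := fun k => by
    rw [integral_comp_mul_divg (contDiff_smoothTransition_comp k 0) hf hF hc]
    congr 1
    refine integral_congr_ae (Eventually.of_forall fun x => ?_)
    simp only [deriv_smoothTransition_comp, hFg]
    ring
  simp_rw [e]
  suffices h : Tendsto (fun k : ℕ => ∫ x, (k : ℝ) * f x *
      deriv smoothTransition ((k : ℝ) * f x - 0) * g x) atTop
      (𝓝 (∫ _ : EuclideanSpace ℝ (Fin n), (0 : ℝ))) by simpa using h.neg
  refine tendsto_integral_of_dominated_convergence (fun x => C * ‖g x‖) (fun k => ?_)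
    (hg.norm.const_mul C)
    (fun k => Eventually.of_forall fun x => ?_) (Eventually.of_forall fun x => ?_)
  · have h1 : Continuous fun x => (k : ℝ) * f x := continuous_const.mul hf.continuous
    exact (h1.mul ((smoothTransition_contDiff_one.continuous_deriv (by simp)).comp
      (h1.sub continuous_const))).aestronglyMeasurable.mul hg.aestronglyMeasurable
  · rw [norm_mul, norm_eq_abs, sub_zero]
    exact mul_le_mul_of_nonneg_right (hC _).2 (norm_nonneg _)
  · simpa using (tendsto_deriv_smoothTransition_mul 0 le_rfl (f x)).mul_const (g x)

/-- The gradient of a smooth function vanishes almost everywhere on its zero set. -/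
lemma ae_pd_eq_zero_of_eq_zero (hf : ContDiff ℝ ∞ f) (i : Fin n) :
    ∀ᵐ x, f x = 0 → pd i f x = 0 := by
  have hf1 : ContDiff ℝ 1 f := hf.of_le (by simp)
  have hp1 : ContDiff ℝ 1 (pd i f) := (pd_contDiff hf i).of_le (by simp)
  have key : ∀ R : ℕ, ∀ᵐ x, x ∈ Metric.ball (0 : EuclideanSpace ℝ (Fin n)) (R + 1) →
      f x = 0 → pd i f x = 0 := by
    intro R
    let χ : ContDiffBump (0 : EuclideanSpace ℝ (Fin n)) := ⟨R + 1, R + 2, by positivity, by linarith⟩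
    have hχ : ContDiff ℝ 1 (χ : EuclideanSpace ℝ (Fin n) → ℝ) := χ.contDiff
    have hχc : HasCompactSupport (χ : EuclideanSpace ℝ (Fin n) → ℝ) := χ.hasCompactSupport
    set w : EuclideanSpace ℝ (Fin n) → ℝ := fun x => χ x * pd i f x with hw
    have hw1 : ContDiff ℝ 1 w := hχ.mul hp1
    have hwc : HasCompactSupport w := hχc.mul_right
    have hI : Integrable fun x => w x * pd i f x :=
      (hw1.continuous.mul (pd_continuous hf1 i)).integrable_of_hasCompactSupport hwc.mul_right
    -- the derivative of `w · arctan (k f) / k` integrates to zero, and `arctan (k f) / k → 0`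
    have e : ∀ k : ℕ, ∫ x, (1 / (1 + (((k : ℝ) + 1) * f x) ^ 2)) * (w x * pd i f x) =
        - ∫ x, (arctan (((k : ℝ) + 1) * f x) / ((k : ℝ) + 1)) * pd i w x := by
      intro k
      have hk : (0 : ℝ) < (k : ℝ) + 1 := by positivity
      set s : ℝ → ℝ := fun t => arctan (((k : ℝ) + 1) * t) / ((k : ℝ) + 1) with hs
      have hs1 : ContDiff ℝ 1 s :=
        (contDiff_arctan.comp (contDiff_const.mul contDiff_id)).div_const _
      have hsd : ∀ t, deriv s t = 1 / (1 + (((k : ℝ) + 1) * t) ^ 2) := fun t => by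
        have h1 : HasDerivAt (fun t : ℝ => ((k : ℝ) + 1) * t) ((k : ℝ) + 1) t := by
          simpa using (hasDerivAt_id t).const_mul ((k : ℝ) + 1)
        rw [(h1.arctan.div_const _).deriv]
        field_simp
      have hsf : ContDiff ℝ 1 fun x => s (f x) := hs1.comp hf1
      have h0 := integral_pd_eq_zero (hsf.mul hw1) hwc.mul_left i
      simp_rw [pd_mul hsf hw1, pd_comp hs1 hf1, hsd] at h0
      rw [integral_add] at h0
      · rw [eq_neg_iff_add_eq_zero, ← h0, add_comm]
        congr 1
        refine integral_congr_ae (Eventually.of_forall fun x => ?_)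
        simp only
        ring
      · exact (hsf.continuous.mul (pd_continuous hw1 i)).integrable_of_hasCompactSupport
          (pd_hasCompactSupport hwc i).mul_left
      · refine Continuous.integrable_of_hasCompactSupport ?_ hwc.mul_right
        refine hw1.continuous.mul (Continuous.mul ?_ (pd_continuous hf1 i))
        refine Continuous.div continuous_const ?_ fun x => by positivity
        have := hf1.continuous
        fun_prop
    have hz : MeasurableSet {x | f x = 0} := (isClosed_eq hf1.continuous continuous_const).measurableSet
    have hL : Tendsto (fun k : ℕ => ∫ x, (1 / (1 + (((k : ℝ) + 1) * f x) ^ 2)) * (w x * pd i f x))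
        atTop (𝓝 (∫ x in {x | f x = 0}, w x * pd i f x)) := by
      rw [← integral_indicator hz]
      refine tendsto_integral_of_dominated_convergence (fun x => ‖w x * pd i f x‖) (fun k => ?_)
        hI.norm (fun k => Eventually.of_forall fun x => ?_) (Eventually.of_forall fun x => ?_)
      · refine Continuous.aestronglyMeasurable ?_
        refine Continuous.mul ?_ (hw1.continuous.mul (pd_continuous hf1 i))
        refine Continuous.div continuous_const ?_ fun x => by positivity
        have := hf1.continuous
        fun_prop
      · rw [norm_mul]
        refine mul_le_of_le_one_left (norm_nonneg _) ?_
        rw [norm_eq_abs, abs_of_nonneg (by positivity), div_le_one (by positivity)]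
        nlinarith [sq_nonneg (((k : ℝ) + 1) * f x)]
      · by_cases hx : f x = 0
        · simp [hx]
        · have h1 : Tendsto (fun k : ℕ => (k : ℝ) + 1) atTop atTop :=
            tendsto_atTop_add_const_right _ _ tendsto_natCast_atTop_atTop
          have h2 : Tendsto (fun k : ℕ => 1 + (((k : ℝ) + 1) * f x) ^ 2) atTop atTop := by
            refine tendsto_atTop_add_const_left _ _ ?_
            simp_rw [mul_pow]
            exact ((tendsto_pow_atTop (by norm_num)).comp h1).atTop_mul_const (by positivity)
          have := (tendsto_const_nhds (x := (1 : ℝ))).div_atTop h2 |>.mul_const (w x * pd i f x)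
          simpa [indicator_apply, hx] using this
    have hR : Tendsto (fun k : ℕ => - ∫ x, (arctan (((k : ℝ) + 1) * f x) / ((k : ℝ) + 1)) * pd i w x)
        atTop (𝓝 0) := by
      rw [← neg_zero]
      refine Tendsto.neg ?_
      refine squeeze_zero_norm (a := fun k : ℕ => (π / 2 / ((k : ℝ) + 1)) * ∫ x, ‖pd i w x‖)
        (fun k => ?_) ?_
      · rw [← integral_const_mul]
        refine norm_integral_le_of_norm_le ((pd_integrable hw1 hwc i).norm.const_mul _)
          (Eventually.of_forall fun x => ?_)
        rw [norm_mul, norm_div, norm_eq_abs, norm_eq_abs, abs_of_nonneg (by positivity : (0:ℝ) ≤ k + 1)]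
        gcongr
        exact abs_le.2 ⟨(neg_pi_div_two_lt_arctan _).le, (arctan_lt_pi_div_two _).le⟩
      · have h1 : Tendsto (fun k : ℕ => (k : ℝ) + 1) atTop atTop :=
          tendsto_atTop_add_const_right _ _ tendsto_natCast_atTop_atTop
        simpa using ((tendsto_const_nhds (x := π / 2)).div_atTop h1).mul_const (∫ x, ‖pd i w x‖)
    simp_rw [e] at hL
    have hzero := tendsto_nhds_unique hL hR
    have hnn : ∀ x, 0 ≤ w x * pd i f x := fun x => by
      rw [hw]; simp only
      rw [mul_assoc]; exact mul_nonneg χ.nonneg (mul_self_nonneg _)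
    rw [integral_eq_zero_iff_of_nonneg hnn hI.integrableOn] at hzero
    have h3 := (ae_restrict_iff' hz).1 hzero
    filter_upwards [h3] with x hx hxR hfx
    have h4 := hx hfx
    have h5 : χ x = 1 := χ.one_of_mem_closedBall (Metric.ball_subset_closedBall hxR)
    simpa [hw, h5] using h4
  rw [← ae_all_iff] at key
  filter_upwards [key] with x hx
  obtain ⟨R, hR⟩ := exists_nat_ge ‖x‖
  exact hx R (by rw [mem_ball_zero_iff]; linarith)

end Cutoff

/-! ### Orthonormal coordinates adapted to a direction -/

/-- Orthonormal coordinates `x = Λ(y, t)` with last axis along a given unit vector `e`: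
`t = ⟪e, x⟫` and `y = P x` is the orthogonal projection to `eᗮ ≅ ℝᵐ`. -/
structure AdaptedFrame {m : ℕ} (e : EuclideanSpace ℝ (Fin (m + 1)))
    (P : EuclideanSpace ℝ (Fin (m + 1)) → EuclideanSpace ℝ (Fin m))
    (Λ : EuclideanSpace ℝ (Fin m) × ℝ → EuclideanSpace ℝ (Fin (m + 1))) : Prop where
  continuous_proj : Continuous P
  continuous_coord : Continuous Λ
  measurePreserving : MeasurePreserving Λ (volume.prod volume) volume
  proj_coord : ∀ y t, P (Λ (y, t)) = y
  coord_line : ∀ y t, Λ (y, t) = Λ (y, 0) + t • e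
  coord_proj : ∀ x, Λ (P x, inner ℝ e x) = x
  norm_sub_sq : ∀ x x', ‖x - x'‖ ^ 2 = ‖P x - P x'‖ ^ 2 + (inner ℝ e (x - x')) ^ 2

lemma exists_adaptedFrame {m : ℕ} (e : EuclideanSpace ℝ (Fin (m + 1))) (he : ‖e‖ = 1) :
    ∃ P Λ, AdaptedFrame e P Λ := by
  obtain ⟨b, hb⟩ := Orthonormal.exists_orthonormalBasis_extension_of_card_eq (𝕜 := ℝ)
    (E := EuclideanSpace ℝ (Fin (m + 1))) (ι := Fin (m + 1)) (by simp)
    (v := fun _ => e) (s := {0}) (by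
      rw [orthonormal_iff_ite]
      rintro ⟨i, hi⟩ ⟨j, hj⟩
      simp only [mem_singleton_iff] at hi hj
      subst hi hj
      simp [he])
  have hb0 : b 0 = e := hb 0 rfl
  have hinner : ∀ x, inner ℝ e x = b.repr x 0 := fun x => by
    rw [b.repr_apply_apply, hb0]
  refine ⟨fun x => WithLp.toLp 2 fun i => b.repr x i.succ,
    fun z => b.repr.symm (WithLp.toLp 2 (Fin.cons z.2 z.1.ofLp : Fin (m + 1) → ℝ)), ?_⟩
  have hcons : ∀ (y : EuclideanSpace ℝ (Fin m)) (t : ℝ),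
      (WithLp.toLp 2 (Fin.cons t y.ofLp : Fin (m + 1) → ℝ)) =
      WithLp.toLp 2 (Fin.cons 0 y.ofLp : Fin (m + 1) → ℝ) +
        t • (EuclideanSpace.single (0 : Fin (m + 1)) (1 : ℝ)) := fun y t => by
    ext i
    refine Fin.cases ?_ (fun i => ?_) i <;> simp
  have hbs : b.repr.symm (EuclideanSpace.single (0 : Fin (m + 1)) (1 : ℝ)) = e := by
    rw [b.repr_symm_single, hb0]
  constructor
  · refine (PiLp.continuous_toLp 2 _).comp (continuous_pi fun i => ?_)
    have := b.repr.continuous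
    fun_prop
  · refine b.repr.symm.continuous.comp ((PiLp.continuous_toLp 2 _).comp (continuous_pi fun i => ?_))
    refine Fin.cases ?_ (fun i => ?_) i
    · simpa using continuous_snd
    · simp only [Fin.cons_succ]
      fun_prop
  · refine b.measurePreserving_repr_symm.comp ((PiLp.volume_preserving_toLp (Fin (m + 1))).comp ?_)
    have h1 := (volume_preserving_piFinSuccAbove (fun _ : Fin (m + 1) => ℝ) 0).symm
    have h2 : MeasurePreserving (Prod.map (@WithLp.ofLp 2 (Fin m → ℝ)) (id : ℝ → ℝ))
      (volume.prod volume) (volume.prod volume) :=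
      (PiLp.volume_preserving_ofLp (Fin m)).prod (MeasurePreserving.id _)
    have h3 := h1.comp (Measure.measurePreserving_swap.comp h2)
    convert h3 using 1
    ext z i
    simp [MeasurableEquiv.piFinSuccAbove, Fin.insertNthEquiv]
  · intro y t
    ext i
    simp
  · intro y t
    simp only
    rw [hcons y t, map_add, map_smul, hbs]
  · intro x
    simp only
    rw [LinearIsometryEquiv.symm_apply_eq, hinner]
    ext i
    refine Fin.cases ?_ (fun i => ?_) i <;> simp
  · intro x x'
    rw [hinner, ← b.repr.norm_map, EuclideanSpace.norm_sq_eq, EuclideanSpace.norm_sq_eq,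
      Fin.sum_univ_succ]
    simp [add_comm]

/-! ### Flux through a zero set that is a graph -/

/-- Along a line on which `φ` is increasing inside the convex set `B`, the integral of the
derivative of `f` over `{φ > 0}` is minus the value of `f` at the crossing
point, and zero when there is no crossing. -/
lemma line_flux_eq {n : ℕ} {φ f : EuclideanSpace ℝ (Fin n) → ℝ}
    {B : Set (EuclideanSpace ℝ (Fin n))} {e : EuclideanSpace ℝ (Fin n)}
    (hφ : ContDiff ℝ 1 φ) (hf : ContDiff ℝ 1 f) (hfc : HasCompactSupport f) (he : ‖e‖ = 1)
    (hB : Convex ℝ B) (hfB : tsupport f ⊆ B)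
    (hpos : ∀ x ∈ B, 0 < fderiv ℝ φ x e) (z : EuclideanSpace ℝ (Fin n)) :
    (∀ t₀ : ℝ, z + t₀ • e ∈ B → φ (z + t₀ • e) = 0 →
      ∫ t : ℝ, {x | 0 < φ x}.indicator (fun x => fderiv ℝ f x e) (z + t • e)
        = - f (z + t₀ • e)) ∧
    ((∀ t : ℝ, z + t • e ∈ B → φ (z + t • e) ≠ 0) →
      ∫ t : ℝ, {x | 0 < φ x}.indicator (fun x => fderiv ℝ f x e) (z + t • e) = 0) := by
  have hline : ∀ t : ℝ, HasDerivAt (fun t : ℝ => z + t • e) e t := fun t => by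
    simpa using ((hasDerivAt_id t).smul_const e).const_add z
  have hlc : Continuous fun t : ℝ => z + t • e := by fun_prop
  have hl1 : ContDiff ℝ 1 fun t : ℝ => z + t • e :=
    contDiff_const.add (contDiff_id.smul contDiff_const)
  set h : ℝ → ℝ := fun t => f (z + t • e) with hh
  set u : ℝ → ℝ := fun t => φ (z + t • e) with hu
  have hd : ∀ t, HasDerivAt h (fderiv ℝ f (z + t • e) e) t := fun t =>
    (hf.differentiable (by simp) _).hasFDerivAt.comp_hasDerivAt t (hline t)
  have hud : ∀ t, HasDerivAt u (fderiv ℝ φ (z + t • e) e) t := fun t =>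
    (hφ.differentiable (by simp) _).hasFDerivAt.comp_hasDerivAt t (hline t)
  have hh1 : ContDiff ℝ 1 h := hf.comp hl1
  have hclosed : IsClosedEmbedding fun t : ℝ => z + t • e := by
    refine Isometry.isClosedEmbedding (Isometry.of_dist_eq fun a b => ?_)
    rw [dist_add_left, dist_eq_norm, ← sub_smul, norm_smul, he, mul_one, dist_eq_norm]
  have hhc : HasCompactSupport h := hfc.comp_isClosedEmbedding hclosed
  have hzero : ∀ t : ℝ, z + t • e ∉ B → fderiv ℝ f (z + t • e) e = 0 := fun t ht => by
    have : z + t • e ∉ tsupport (fderiv ℝ f) := fun h' => ht (hfB (tsupport_fderiv_subset ℝ h'))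
    rw [image_eq_zero_of_notMem_tsupport this]; simp
  have hI : Convex ℝ {t : ℝ | z + t • e ∈ B} := by
    intro a ha b hb α β hα hβ hαβ
    have : z + (α • a + β • b) • e = α • (z + a • e) + β • (z + b • e) := by
      have hz : z = (α + β) • z := by rw [hαβ, one_smul]
      conv_lhs => rw [hz]
      simp only [smul_eq_mul]
      module
    change z + (α • a + β • b) • e ∈ B
    rw [this]
    exact hB ha hb hα hβ hαβ
  have huc : Continuous u := hφ.continuous.comp hlc
  have hmono : StrictMonoOn u {t : ℝ | z + t • e ∈ B} := by
    refine strictMonoOn_of_deriv_pos hI huc.continuousOn fun t ht => ?_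
    rw [(hud t).deriv]
    have ht' : t ∈ {t : ℝ | z + t • e ∈ B} := interior_subset ht
    exact hpos _ ht'
  have hderiv : deriv h = fun t => fderiv ℝ f (z + t • e) e := funext fun t => (hd t).deriv
  constructor
  · intro t₀ ht₀ hz₀
    have e1 : (fun t : ℝ => {x | 0 < φ x}.indicator (fun x => fderiv ℝ f x e) (z + t • e))
        = (Ioi t₀).indicator (deriv h) := by
      ext t
      rw [hderiv]
      by_cases ht : z + t • e ∈ B
      · have : 0 < φ (z + t • e) ↔ t₀ < t := by
          rw [← hz₀]; exact hmono.lt_iff_lt ht₀ ht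
        simp [indicator_apply, this]
      · simp [indicator_apply, hzero t ht]
    rw [e1, integral_indicator measurableSet_Ioi, hhc.integral_Ioi_deriv_eq hh1]
  · intro hne
    have hsign : (∀ t : ℝ, z + t • e ∈ B → 0 < u t) ∨ (∀ t : ℝ, z + t • e ∈ B → ¬ 0 < u t) := by
      by_contra! hcon
      obtain ⟨⟨t₁, ht₁, h1⟩, t₂, ht₂, h2⟩ := hcon
      obtain ⟨t, ht, h0⟩ := hI.isPreconnected.intermediate_value ht₁ ht₂ huc.continuousOn ⟨h1, h2.le⟩
      exact hne t ht h0
    rcases hsign with hs | hs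
    · have e1 : (fun t : ℝ => {x | 0 < φ x}.indicator (fun x => fderiv ℝ f x e) (z + t • e))
          = deriv h := by
        ext t
        rw [hderiv]
        by_cases ht : z + t • e ∈ B
        · simp only [indicator_apply, mem_ofPred_eq]
          rw [if_pos (hs t ht)]
        · simp [indicator_apply, hzero t ht]
      rw [e1]
      exact integral_eq_zero_of_hasDerivAt_of_integrable (fun t => (hh1.differentiable (by simp) t).hasDerivAt)
        ((hh1.continuous_deriv (by simp)).integrable_of_hasCompactSupport hhc.deriv)
        (hh1.continuous.integrable_of_hasCompactSupport hhc)
    · refine integral_eq_zero_of_ae (Eventually.of_forall fun t => ?_)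
      by_cases ht : z + t • e ∈ B
      · simp only [indicator_apply, mem_ofPred_eq]
        rw [if_neg (hs t ht)]
        rfl
      · simp [indicator_apply, hzero t ht]

/-- The ratio of `μH[m]` to Lebesgue measure on `ℝᵐ`; only its finiteness matters. -/
def hausdorffFactor (m : ℕ) : ℝ≥0 :=
  haveI : Measure.IsAddHaarMeasure (μH[(m : ℝ)] : Measure (EuclideanSpace ℝ (Fin m))) := by
    simpa using isAddHaarMeasure_hausdorffMeasure (E := EuclideanSpace ℝ (Fin m))
  Measure.addHaarScalarFactor (μH[(m : ℝ)] : Measure (EuclideanSpace ℝ (Fin m))) volume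

lemma hausdorffMeasure_eq_factor (m : ℕ) :
    (μH[(m : ℝ)] : Measure (EuclideanSpace ℝ (Fin m))) = hausdorffFactor m • volume := by
  have : Measure.IsAddHaarMeasure (μH[(m : ℝ)] : Measure (EuclideanSpace ℝ (Fin m))) := by
    simpa using isAddHaarMeasure_hausdorffMeasure (E := EuclideanSpace ℝ (Fin m))
  exact Measure.isAddLeftInvariant_eq_smul _ _

/-- If the projection along `e` distorts distances on the zero set of `φ` inside `B` by a factor
between `1` and `K`, the Hausdorff integral of `f` over the zero set agrees, up to `K ^ m` and the
universal factor, with the flux `-∫_{φ > 0} ∂f/∂e`. -/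
lemma graph_flux_compare {m : ℕ} {φ f : EuclideanSpace ℝ (Fin (m + 1)) → ℝ}
    {B : Set (EuclideanSpace ℝ (Fin (m + 1)))} {e : EuclideanSpace ℝ (Fin (m + 1))}
    {P : EuclideanSpace ℝ (Fin (m + 1)) → EuclideanSpace ℝ (Fin m)}
    {Λ : EuclideanSpace ℝ (Fin m) × ℝ → EuclideanSpace ℝ (Fin (m + 1))}
    (hfr : AdaptedFrame e P Λ) (he : ‖e‖ = 1)
    (hφ : ContDiff ℝ 1 φ) (hf : ContDiff ℝ 1 f) (hfc : HasCompactSupport f) (hf0 : ∀ x, 0 ≤ f x)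
    (hBo : IsOpen B) (hB : Convex ℝ B) (hfB : tsupport f ⊆ B)
    (hpos : ∀ x ∈ B, 0 < fderiv ℝ φ x e) {K : ℝ≥0}
    (hK : ∀ x ∈ B, ∀ x' ∈ B, φ x = 0 → φ x' = 0 → ‖x - x'‖ ≤ K * ‖P x - P x'‖) :
    0 ≤ -∫ x in {x | 0 < φ x}, fderiv ℝ f x e ∧
    ∫⁻ x in {x | φ x = 0}, ENNReal.ofReal (f x) ∂μH[(m : ℝ)] ≤
      (K : ℝ≥0∞) ^ m * (hausdorffFactor m *
        ENNReal.ofReal (-∫ x in {x | 0 < φ x}, fderiv ℝ f x e)) ∧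
    hausdorffFactor m * ENNReal.ofReal (-∫ x in {x | 0 < φ x}, fderiv ℝ f x e) ≤
      ∫⁻ x in {x | φ x = 0}, ENNReal.ofReal (f x) ∂μH[(m : ℝ)] := by
  have hmpos : MeasurableSet {x | 0 < φ x} :=
    (isOpen_lt continuous_const hφ.continuous).measurableSet
  have hmz : MeasurableSet {x | φ x = 0} :=
    (isClosed_eq hφ.continuous continuous_const).measurableSet
  set g := {x | 0 < φ x}.indicator (fun x => fderiv ℝ f x e) with hg
  have hfe : Continuous fun x => fderiv ℝ f x e :=
    (hf.continuous_fderiv (by simp)).clm_apply continuous_const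
  have hgm : Measurable g := hfe.measurable.indicator hmpos
  have hgi : Integrable g :=
    (hfe.integrable_of_hasCompactSupport (hfc.fderiv_apply ℝ e)).indicator hmpos
  have hgΛ : Integrable (g ∘ Λ) (volume.prod volume) :=
    hfr.measurePreserving.integrable_comp_of_integrable hgi
  set G : EuclideanSpace ℝ (Fin m) → ℝ := fun y => -∫ t, g (Λ (y, t)) with hGdef
  have hGm : Measurable G := by
    have h1 : StronglyMeasurable (g ∘ Λ) :=
      (hgm.comp hfr.continuous_coord.measurable).stronglyMeasurable
    exact h1.integral_prod_right'.measurable.neg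
  have hGi : Integrable G := hgΛ.integral_prod_left.neg
  have hGint : ∫ y, G y = -∫ x in {x | 0 < φ x}, fderiv ℝ f x e := by
    rw [← integral_indicator hmpos, ← hg, hGdef, integral_neg]
    have h1 := integral_prod _ hgΛ
    simp only [Function.comp_apply] at h1
    rw [← h1, ← hfr.measurePreserving.map_eq, integral_map hfr.continuous_coord.aemeasurable
      hgm.aestronglyMeasurable]
  have hGeq : ∀ y, G y = -∫ t : ℝ, g (Λ (y, 0) + t • e) := by
    intro y
    simp only [hGdef]
    congr 1
    refine integral_congr_ae (Eventually.of_forall fun t => ?_)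
    change g (Λ (y, t)) = _
    rw [hfr.coord_line y t]
  have hline := fun y => line_flux_eq hφ hf hfc he hB hfB hpos (Λ (y, 0))
  have hG1 : ∀ x ∈ B, φ x = 0 → G (P x) = f x := by
    intro x hx hx0
    have hx' : Λ (P x, 0) + (inner ℝ e x) • e = x := by
      rw [← hfr.coord_line, hfr.coord_proj]
    have := (hline (P x)).1 (inner ℝ e x) (by rwa [hx']) (by rwa [hx'])
    rw [hx'] at this
    rw [hGeq, hg, this, neg_neg]
  have hG2 : ∀ y, G y ≠ 0 → ∃ x ∈ B, φ x = 0 ∧ P x = y := by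
    intro y hy
    by_contra! hcon
    refine hy ?_
    have := (hline y).2 fun t ht h0 => hcon _ ht h0 (by rw [← hfr.coord_line, hfr.proj_coord])
    rw [hGeq, hg, this, neg_zero]
  have hG0 : ∀ y, 0 ≤ G y := by
    intro y
    by_cases hy : G y = 0
    · exact hy.ge
    · obtain ⟨x, hx, hx0, rfl⟩ := hG2 y hy
      rw [hG1 x hx hx0]; exact hf0 x
  have hJ : 0 ≤ -∫ x in {x | 0 < φ x}, fderiv ℝ f x e := hGint ▸ integral_nonneg hG0
  set S := B ∩ {x | φ x = 0} with hS
  have hSm : MeasurableSet S := hBo.measurableSet.inter hmz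
  -- transport both sides to the base `ℝᵐ` of the graph
  set ν := Measure.map P ((μH[(m : ℝ)] : Measure (EuclideanSpace ℝ (Fin (m + 1)))).restrict S)
    with hν
  have hA : ∫⁻ x in {x | φ x = 0}, ENNReal.ofReal (f x) ∂μH[(m : ℝ)] =
      ∫⁻ y, ENNReal.ofReal (G y) ∂ν := by
    rw [hν, lintegral_map hGm.ennreal_ofReal hfr.continuous_proj.measurable,
      ← lintegral_indicator hmz, ← lintegral_indicator hSm]
    congr 1
    ext x
    by_cases hx : x ∈ B
    · by_cases hx0 : φ x = 0
      · simp [hS, hx, hx0, hG1 x hx hx0]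
      · simp [hS, hx0]
    · have : f x = 0 := image_eq_zero_of_notMem_tsupport fun h => hx (hfB h)
      simp [hS, hx, this]
  have hBase : ∫⁻ y, ENNReal.ofReal (G y) ∂μH[(m : ℝ)] = hausdorffFactor m *
      ENNReal.ofReal (-∫ x in {x | 0 < φ x}, fderiv ℝ f x e) := by
    rw [hausdorffMeasure_eq_factor, ← hGint, ofReal_integral_eq_lintegral_ofReal hGi
      (Eventually.of_forall hG0), lintegral_smul_measure]
    rfl
  have hνapp : ∀ A, MeasurableSet A → ν A = μH[(m : ℝ)] (P ⁻¹' A ∩ S) := fun A hA' => by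
    rw [hν, Measure.map_apply hfr.continuous_proj.measurable hA',
      Measure.restrict_apply (hfr.continuous_proj.measurable hA')]
  have hPlip : LipschitzWith 1 P := by
    refine LipschitzWith.of_dist_le_mul fun x x' => ?_
    rw [dist_eq_norm, dist_eq_norm, NNReal.coe_one, one_mul]
    refine le_of_sq_le_sq ?_ (norm_nonneg _)
    rw [hfr.norm_sub_sq x x']
    nlinarith [sq_nonneg (inner ℝ e (x - x'))]
  have hupper : ν ≤ ((K : ℝ≥0∞) ^ m) • (μH[(m : ℝ)] : Measure (EuclideanSpace ℝ (Fin m))) := by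
    refine Measure.le_iff.2 fun A hA' => ?_
    rw [hνapp A hA', Measure.smul_apply, smul_eq_mul]
    set T := P ⁻¹' A ∩ S
    have hTS : T ⊆ S := inter_subset_right
    have hinj : InjOn P T := by
      intro x hx x' hx' hxx
      have := hK x (hTS hx).1 x' (hTS hx').1 (hTS hx).2 (hTS hx').2
      rw [hxx, sub_self, norm_zero, mul_zero] at this
      exact sub_eq_zero.1 (norm_le_zero_iff.1 this)
    have hinv : Function.invFunOn P T '' (P '' T) = T :=
      hinj.invFunOn_image (Subset.refl _)
    have hlip : LipschitzOnWith K (Function.invFunOn P T) (P '' T) := by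
      refine LipschitzOnWith.of_dist_le_mul ?_
      rintro _ ⟨x, hx, rfl⟩ _ ⟨x', hx', rfl⟩
      rw [hinj.leftInvOn_invFunOn hx, hinj.leftInvOn_invFunOn hx', dist_eq_norm, dist_eq_norm]
      exact hK x (hTS hx).1 x' (hTS hx').1 (hTS hx).2 (hTS hx').2
    have h1 := hlip.hausdorffMeasure_image_le (d := m) (by positivity)
    rw [hinv, ENNReal.rpow_natCast] at h1
    refine h1.trans ?_
    gcongr
    rintro _ ⟨x, hx, rfl⟩
    exact hx.1
  have hGne : MeasurableSet {y | G y ≠ 0} := hGm (measurableSet_singleton 0).compl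
  have hlower : (μH[(m : ℝ)] : Measure (EuclideanSpace ℝ (Fin m))).restrict {y | G y ≠ 0} ≤ ν := by
    refine Measure.le_iff.2 fun A hA' => ?_
    rw [hνapp A hA', Measure.restrict_apply hA']
    have h1 := hPlip.hausdorffMeasure_image_le (d := m) (by positivity) (P ⁻¹' A ∩ S)
    rw [ENNReal.coe_one, ENNReal.one_rpow, one_mul] at h1
    refine le_trans (measure_mono ?_) h1
    rintro y ⟨hyA, hy⟩
    obtain ⟨x, hx, hx0, rfl⟩ := hG2 y hy
    exact ⟨x, ⟨hyA, hx, hx0⟩, rfl⟩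
  refine ⟨hJ, ?_, ?_⟩
  · rw [hA, ← hBase, ← smul_eq_mul, ← lintegral_smul_measure]
    exact lintegral_mono' hupper le_rfl
  · rw [hA, ← hBase]
    calc ∫⁻ y, ENNReal.ofReal (G y) ∂μH[(m : ℝ)]
        = ∫⁻ y in {y | G y ≠ 0}, ENNReal.ofReal (G y) ∂μH[(m : ℝ)] := by
          rw [← lintegral_indicator hGne]
          congr 1
          ext y
          by_cases hy : G y = 0 <;> simp [hy]
      _ ≤ _ := lintegral_mono' hlower le_rfl

/-! ### The flux formula near a regular zero -/

/-- The integral of the nonnegative weight `w ‖∇φ‖` over the full zero set of `φ`, with respect to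
the codimension-one Hausdorff measure, as an extended nonnegative number. -/
def nodalMass {m : ℕ} (φ w : EuclideanSpace ℝ (Fin (m + 1)) → ℝ) : ℝ≥0∞ :=
  ∫⁻ x in {x | φ x = 0}, ENNReal.ofReal (w x * ‖gradient φ x‖) ∂μH[(m : ℝ)]

/-- The quantity `-∫_{φ > 0} div (w ∇φ)`, which by the divergence theorem is the flux of `w ∇φ`
through the zero set of `φ`. -/
def gradFlux {n : ℕ} (φ w : EuclideanSpace ℝ (Fin n) → ℝ) : ℝ :=
  -∫ x in {x | 0 < φ x}, divg (fun i y => w y * pd i φ y) x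

lemma fderiv_eq_inner_gradient {n : ℕ} {φ : EuclideanSpace ℝ (Fin n) → ℝ}
    (x v : EuclideanSpace ℝ (Fin n)) : fderiv ℝ φ x v = inner ℝ (gradient φ x) v := by
  unfold gradient
  exact InnerProductSpace.toDual_symm_apply.symm

lemma norm_gradient_sub {n : ℕ} {φ : EuclideanSpace ℝ (Fin n) → ℝ}
    (x p : EuclideanSpace ℝ (Fin n)) :
    ‖gradient φ x - gradient φ p‖ = ‖fderiv ℝ φ x - fderiv ℝ φ p‖ := by
  unfold gradient
  rw [← map_sub, LinearIsometryEquiv.norm_map]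

lemma pd_sub {n : ℕ} {f g : EuclideanSpace ℝ (Fin n) → ℝ} (hf : ContDiff ℝ 1 f)
    (hg : ContDiff ℝ 1 g) (i : Fin n) (x) :
    pd i (fun y => f y - g y) x = pd i f x - pd i g x := by
  unfold pd
  rw [fderiv_fun_sub (hf.differentiable (by simp) x) (hg.differentiable (by simp) x)]
  simp

lemma pd_mul_const {n : ℕ} {f : EuclideanSpace ℝ (Fin n) → ℝ} (hf : ContDiff ℝ 1 f) (c : ℝ)
    (i : Fin n) (x) : pd i (fun y => f y * c) x = c * pd i f x := by
  unfold pd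
  rw [fderiv_mul_const (hf.differentiable (by simp) x)]
  simp

lemma contDiff_div_of_tsupport {n : ℕ} {w d : EuclideanSpace ℝ (Fin n) → ℝ}
    (hw : ContDiff ℝ 1 w) (hd : ContDiff ℝ 1 d) (h : ∀ x ∈ tsupport w, d x ≠ 0) :
    ContDiff ℝ 1 fun x => w x / d x := by
  refine contDiff_iff_contDiffAt.2 fun x => ?_
  by_cases hx : x ∈ tsupport w
  · exact hw.contDiffAt.div hd.contDiffAt (h x hx)
  · have : (fun x => w x / d x) =ᶠ[𝓝 x] fun _ => 0 := by
      filter_upwards [notMem_tsupport_iff_eventuallyEq.1 hx] with y hy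
      simp [hy]
    exact contDiffAt_const.congr_of_eventuallyEq this

/-- Near a regular zero the zero set is a graph with slope at most `κ` over the hyperplane
orthogonal to the gradient, which gives the coarea-type identity up to factors tending to `1` with
`κ → 0`. -/
lemma local_flux {m : ℕ} {φ : EuclideanSpace ℝ (Fin (m + 1)) → ℝ} (hφ : ContDiff ℝ ∞ φ)
    {p : EuclideanSpace ℝ (Fin (m + 1))} (hp : gradient φ p ≠ 0) {κ : ℝ} (hκ0 : 0 < κ)
    (hκ1 : κ < 1) :
    ∃ U, IsOpen U ∧ p ∈ U ∧ ∀ w : EuclideanSpace ℝ (Fin (m + 1)) → ℝ, ContDiff ℝ 1 w →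
      HasCompactSupport w → (∀ x, 0 ≤ w x) → tsupport w ⊆ U →
      0 ≤ gradFlux φ w ∧
      nodalMass φ w ≤ ENNReal.ofReal (1 - κ)⁻¹ ^ m *
        (hausdorffFactor m * ENNReal.ofReal (gradFlux φ w)) ∧
      hausdorffFactor m * ENNReal.ofReal (gradFlux φ w) ≤
        ENNReal.ofReal ((1 + κ) / (1 - κ)) * nodalMass φ w := by
  have hφ1 : ContDiff ℝ 1 φ := hφ.of_le (by simp)
  set a := ‖gradient φ p‖ with ha
  have ha0 : 0 < a := norm_pos_iff.2 hp
  set e := a⁻¹ • gradient φ p with he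
  have he1 : ‖e‖ = 1 := by rw [he, norm_smul, norm_inv, norm_norm, ← ha, inv_mul_cancel₀ ha0.ne']
  have hgp : gradient φ p = a • e := by rw [he, smul_inv_smul₀ ha0.ne']
  have hpe : ∀ v, fderiv ℝ φ p v = a * inner ℝ e v := fun v => by
    rw [fderiv_eq_inner_gradient, hgp, real_inner_smul_left]
  obtain ⟨P, Λ, hfr⟩ := exists_adaptedFrame e he1
  obtain ⟨r, hr, hball⟩ := Metric.continuousAt_iff.1
    ((hφ1.continuous_fderiv (by simp)).continuousAt (x := p)) (κ * a) (by positivity)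
  set U := Metric.ball p r with hU
  have hclose : ∀ x ∈ U, ‖fderiv ℝ φ x - fderiv ℝ φ p‖ ≤ κ * a := fun x hx => by
    rw [← dist_eq_norm]; exact (hball hx).le
  have hde : ∀ x ∈ U, (1 - κ) * a ≤ fderiv ℝ φ x e := fun x hx => by
    have h1 := (fderiv ℝ φ x - fderiv ℝ φ p).le_opNorm e
    rw [he1, mul_one, _root_.sub_apply, hpe, real_inner_self_eq_norm_sq, he1,
      Real.norm_eq_abs] at h1
    have := (abs_le.1 (h1.trans (hclose x hx))).1
    linarith
  have hdpos : ∀ x ∈ U, 0 < fderiv ℝ φ x e := fun x hx =>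
    lt_of_lt_of_le (mul_pos (by linarith) ha0) (hde x hx)
  have hgr : ∀ x ∈ U, ‖gradient φ x‖ ≤ (1 + κ) * a := fun x hx => by
    have h1 := norm_add_le (gradient φ x - gradient φ p) (gradient φ p)
    rw [sub_add_cancel, norm_gradient_sub, ← ha] at h1
    linarith [hclose x hx]
  have hdle : ∀ x, fderiv ℝ φ x e ≤ ‖gradient φ x‖ := fun x => by
    rw [fderiv_eq_inner_gradient]
    simpa [he1] using real_inner_le_norm (gradient φ x) e
  have hKpos : (0 : ℝ) ≤ (1 - κ)⁻¹ := inv_nonneg.2 (by linarith)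
  have hK : ∀ x ∈ U, ∀ x' ∈ U, φ x = 0 → φ x' = 0 →
      ‖x - x'‖ ≤ ((1 - κ)⁻¹).toNNReal * ‖P x - P x'‖ := by
    intro x hx x' hx' h0 h0'
    have h1 := (convex_ball p r).norm_image_sub_le_of_norm_fderiv_le' (f := φ) (𝕜 := ℝ)
      (φ := fderiv ℝ φ p) (C := κ * a) (fun y _ => hφ1.differentiable (by simp) y) hclose hx' hx
    rw [h0, h0', sub_zero, zero_sub, norm_neg, hpe, Real.norm_eq_abs, abs_mul, abs_of_pos ha0] at h1
    have h2 : |inner ℝ e (x - x')| ≤ κ * ‖x - x'‖ := by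
      refine le_of_mul_le_mul_left ?_ ha0
      linarith
    have h3 := hfr.norm_sub_sq x x'
    have h4 : (inner ℝ e (x - x')) ^ 2 ≤ (κ * ‖x - x'‖) ^ 2 := by
      rw [← sq_abs]; gcongr
    have h5 : ((1 - κ) * ‖x - x'‖) ^ 2 ≤ ‖P x - P x'‖ ^ 2 := by
      nlinarith [sq_nonneg ‖x - x'‖, mul_nonneg (mul_nonneg hκ0.le (sub_nonneg.2 hκ1.le))
        (sq_nonneg ‖x - x'‖)]
    have h6 := abs_le_of_sq_le_sq h5 (norm_nonneg _)
    rw [Real.coe_toNNReal _ hKpos, ← div_eq_inv_mul, le_div_iff₀ (by linarith)]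
    linarith [(abs_le.1 h6).2]
  refine ⟨U, Metric.isOpen_ball, Metric.mem_ball_self hr, fun w hw hwc hw0 hwU => ?_⟩
  set q : EuclideanSpace ℝ (Fin (m + 1)) → ℝ := fun x => ∑ i, pd i φ x ^ 2 with hq
  have hpdc : ∀ i, ContDiff ℝ 1 (pd i φ) := fun i => (pd_contDiff hφ i).of_le (by simp)
  have hqc : ContDiff ℝ 1 q := ContDiff.sum fun i _ => (hpdc i).pow 2
  have hdc : ContDiff ℝ 1 fun x => fderiv ℝ φ x e :=
    ((hφ.fderiv_right (m := ∞) (by simp)).clm_apply contDiff_const).of_le (by simp)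
  set f : EuclideanSpace ℝ (Fin (m + 1)) → ℝ := fun x => w x * q x / fderiv ℝ φ x e with hf
  have hsub : tsupport (fun x => w x * q x) ⊆ tsupport w := tsupport_mul_subset_left
  have hfc : ContDiff ℝ 1 f :=
    contDiff_div_of_tsupport (hw.mul hqc) hdc fun x hx => (hdpos x (hwU (hsub hx))).ne'
  have hfw : tsupport f ⊆ tsupport w := by
    refine closure_mono fun x hx => ?_
    rw [Function.mem_support] at hx ⊢
    contrapose! hx
    simp [hf, hx]
  have hfcs : HasCompactSupport f := hwc.of_isClosed_subset (isClosed_tsupport f) hfw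
  have hqn : ∀ x, q x = ‖gradient φ x‖ ^ 2 := fun x => (norm_gradient_sq x).symm
  have hw_zero : ∀ x, x ∉ U → w x = 0 := fun x hx =>
    image_eq_zero_of_notMem_tsupport fun h => hx (hwU h)
  have hlow : ∀ x, w x * ‖gradient φ x‖ ≤ f x := fun x => by
    by_cases hx : x ∈ U
    · simp only [hf, hqn]
      rw [le_div_iff₀ (hdpos x hx)]
      have := mul_le_mul_of_nonneg_left (hdle x) (mul_nonneg (hw0 x) (norm_nonneg (gradient φ x)))
      linarith
    · simp [hf, hw_zero x hx]
  have hhigh : ∀ x, f x ≤ (1 + κ) / (1 - κ) * (w x * ‖gradient φ x‖) := fun x => by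
    by_cases hx : x ∈ U
    · simp only [hf, hqn]
      rw [div_le_iff₀ (hdpos x hx), div_mul_eq_mul_div, div_mul_eq_mul_div,
        le_div_iff₀ (by linarith)]
      have h1 : ‖gradient φ x‖ * (1 - κ) ≤ (1 + κ) * fderiv ℝ φ x e := by
        nlinarith [hgr x hx, hde x hx]
      have := mul_le_mul_of_nonneg_left h1 (mul_nonneg (hw0 x) (norm_nonneg (gradient φ x)))
      linarith
    · simp [hf, hw_zero x hx]
  have hf0 : ∀ x, 0 ≤ f x := fun x => (mul_nonneg (hw0 x) (norm_nonneg _)).trans (hlow x)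
  -- `w ∇φ - f e` is tangent to the level sets, so it carries no flux
  have hflux : gradFlux φ w = -∫ x in {x | 0 < φ x}, fderiv ℝ f x e := by
    have hF1 : ∀ i, ContDiff ℝ 1 fun y => w y * pd i φ y := fun i => hw.mul (hpdc i)
    have hF2 : ∀ i, ContDiff ℝ 1 fun y => f y * e i := fun i => hfc.mul contDiff_const
    have hc1 : ∀ i, HasCompactSupport fun y => w y * pd i φ y := fun i => hwc.mul_right
    have hc2 : ∀ i, HasCompactSupport fun y => f y * e i := fun i => hfcs.mul_right
    have h0 := integral_divg_pos_eq_zero (g := fun _ => 0) hφ1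
      (F := fun i y => w y * pd i φ y - f y * e i) (fun i => (hF1 i).sub (hF2 i))
      (fun i => (hc1 i).sub (hc2 i)) (integrable_zero _ _ _) (fun x => by
        rw [mul_zero]
        have h1 : ∑ i, (w x * pd i φ x - f x * e i) * pd i φ x =
            w x * q x - f x * fderiv ℝ φ x e := by
          rw [fderiv_eq_sum_pd, hq]
          simp only [Finset.mul_sum, ← Finset.sum_sub_distrib]
          exact Finset.sum_congr rfl fun i _ => by ring
        rw [h1]
        by_cases hx : x ∈ U
        · simp only [hf]; rw [div_mul_cancel₀ _ (hdpos x hx).ne', sub_self]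
        · simp [hf, hw_zero x hx])
    have h2 : ∀ x, divg (fun i y => w y * pd i φ y - f y * e i) x =
        divg (fun i y => w y * pd i φ y) x - fderiv ℝ f x e := fun x => by
      rw [fderiv_eq_sum_pd]
      unfold divg
      rw [← Finset.sum_sub_distrib]
      refine Finset.sum_congr rfl fun i _ => ?_
      rw [pd_sub (hF1 i) (hF2 i), pd_mul_const hfc]
    simp_rw [h2] at h0
    rw [integral_sub (divg_integrable hF1 hc1).integrableOn
      (((hfc.continuous_fderiv (by simp)).clm_apply
        continuous_const).integrable_of_hasCompactSupport
          (hfcs.fderiv_apply ℝ e)).integrableOn] at h0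
    unfold gradFlux
    linarith
  obtain ⟨h1, h2, h3⟩ := graph_flux_compare hfr he1 hφ1 hfc hfcs hf0 Metric.isOpen_ball
    (convex_ball p r) (hfw.trans hwU) hdpos hK
  rw [← hflux] at h1 h2 h3
  refine ⟨h1, le_trans (lintegral_mono fun x => ENNReal.ofReal_le_ofReal (hlow x)) h2,
    h3.trans ?_⟩
  unfold nodalMass
  rw [← lintegral_const_mul' _ _ ENNReal.ofReal_ne_top]
  refine lintegral_mono fun x => ?_
  rw [← ENNReal.ofReal_mul (div_nonneg (by linarith) (by linarith))]
  exact ENNReal.ofReal_le_ofReal (hhigh x)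

/-! ### The flux formula on the regular set -/

section FluxFormula

variable {m : ℕ} {φ : EuclideanSpace ℝ (Fin (m + 1)) → ℝ}

lemma nodalMass_sum {ι : Type*} (s : Finset ι) (hφ : ContDiff ℝ ∞ φ)
    {w : ι → EuclideanSpace ℝ (Fin (m + 1)) → ℝ} (hw : ∀ i ∈ s, ContDiff ℝ 1 (w i))
    (hw0 : ∀ i ∈ s, ∀ x, 0 ≤ w i x) :
    nodalMass φ (fun x => ∑ i ∈ s, w i x) = ∑ i ∈ s, nodalMass φ (w i) := by
  unfold nodalMass
  rw [← lintegral_finsetSum' s fun i hi => ?_]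
  · refine lintegral_congr fun x => ?_
    rw [Finset.sum_mul, ENNReal.ofReal_sum_of_nonneg fun i hi =>
      mul_nonneg (hw0 i hi x) (norm_nonneg _)]
  · exact ((hw i hi).continuous.mul
      (continuous_gradient (hφ.of_le (by simp))).norm).measurable.ennreal_ofReal.aemeasurable

lemma gradFlux_sum {ι : Type*} (s : Finset ι) (hφ : ContDiff ℝ ∞ φ)
    {w : ι → EuclideanSpace ℝ (Fin (m + 1)) → ℝ} (hw : ∀ i ∈ s, ContDiff ℝ 1 (w i))
    (hwc : ∀ i ∈ s, HasCompactSupport (w i)) :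
    gradFlux φ (fun x => ∑ i ∈ s, w i x) = ∑ i ∈ s, gradFlux φ (w i) := by
  have hpdc : ∀ i, ContDiff ℝ 1 (pd i φ) := fun i => (pd_contDiff hφ i).of_le (by simp)
  unfold gradFlux
  rw [Finset.sum_neg_distrib, ← integral_finsetSum s fun i hi =>
    (divg_integrable (fun j => (hw i hi).mul (hpdc j)) fun j =>
      (hwc i hi).mul_right).integrableOn]
  congr 2
  ext x
  unfold divg
  rw [Finset.sum_comm]
  refine Finset.sum_congr rfl fun j _ => ?_
  simp only [Finset.sum_mul]
  exact pd_sum s (fun i hi => (hw i hi).mul (hpdc j)) j x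

/-- The local comparison, patched together by a partition of unity on the regular set. -/
lemma regular_flux_compare (hφ : ContDiff ℝ ∞ φ) {κ : ℝ} (hκ0 : 0 < κ) (hκ1 : κ < 1)
    {w : EuclideanSpace ℝ (Fin (m + 1)) → ℝ} (hw : ContDiff ℝ 1 w) (hwc : HasCompactSupport w)
    (hw0 : ∀ x, 0 ≤ w x) (hreg : ∀ x ∈ tsupport w, gradient φ x ≠ 0) :
    0 ≤ gradFlux φ w ∧
      nodalMass φ w ≤ ENNReal.ofReal (1 - κ)⁻¹ ^ m *
        (hausdorffFactor m * ENNReal.ofReal (gradFlux φ w)) ∧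
      hausdorffFactor m * ENNReal.ofReal (gradFlux φ w) ≤
        ENNReal.ofReal ((1 + κ) / (1 - κ)) * nodalMass φ w := by
  choose U hUo hpU hU using fun p : {p // gradient φ p ≠ 0} => local_flux hφ p.2 hκ0 hκ1
  obtain ⟨t, ht⟩ := IsCompact.elim_finite_subcover (hwc : IsCompact (tsupport w)) U hUo
    fun x hx => mem_iUnion.2 ⟨⟨x, hreg x hx⟩, hpU ⟨x, hreg x hx⟩⟩
  obtain ⟨ρ, hρ⟩ := SmoothPartitionOfUnity.exists_isSubordinate
    (modelWithCornersSelf ℝ (EuclideanSpace ℝ (Fin (m + 1)))) (isClosed_tsupport w)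
    (fun i : t => U i) (fun i => hUo i) (by
      intro x hx
      obtain ⟨i, hi, hxi⟩ := mem_iUnion₂.1 (ht hx)
      exact mem_iUnion.2 ⟨⟨i, hi⟩, hxi⟩)
  set v : t → EuclideanSpace ℝ (Fin (m + 1)) → ℝ := fun i x => ρ i x * w x with hv
  have hv1 : ∀ i ∈ (Finset.univ : Finset t), ContDiff ℝ 1 (v i) := fun i _ =>
    ((ρ i).contMDiff.contDiff.of_le (by simp)).mul hw
  have hvc : ∀ i ∈ (Finset.univ : Finset t), HasCompactSupport (v i) := fun i _ => hwc.mul_left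
  have hv0 : ∀ i ∈ (Finset.univ : Finset t), ∀ x, 0 ≤ v i x := fun i _ x =>
    mul_nonneg (ρ.nonneg i x) (hw0 x)
  have hsum : w = fun x => ∑ i, v i x := by
    ext x
    by_cases hx : x ∈ tsupport w
    · have h1 := ρ.sum_eq_one hx
      rw [finsum_eq_sum_of_fintype] at h1
      simp only [hv, ← Finset.sum_mul, h1, one_mul]
    · simp [hv, image_eq_zero_of_notMem_tsupport hx]
  have key := fun i : t => hU i (v i) (hv1 i (Finset.mem_univ _)) (hvc i (Finset.mem_univ _))
    (hv0 i (Finset.mem_univ _)) ((tsupport_mul_subset_left).trans (hρ i))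
  have hA : nodalMass φ w = ∑ i, nodalMass φ (v i) := by
    conv_lhs => rw [hsum]
    exact nodalMass_sum _ hφ hv1 hv0
  have hJ : gradFlux φ w = ∑ i, gradFlux φ (v i) := by
    conv_lhs => rw [hsum]
    exact gradFlux_sum _ hφ hv1 hvc
  refine ⟨hJ ▸ Finset.sum_nonneg fun i _ => (key i).1, ?_, ?_⟩
  · rw [hA, hJ, ENNReal.ofReal_sum_of_nonneg fun i _ => (key i).1, Finset.mul_sum,
      Finset.mul_sum]
    exact Finset.sum_le_sum fun i _ => (key i).2.1
  · rw [hA, hJ, ENNReal.ofReal_sum_of_nonneg fun i _ => (key i).1, Finset.mul_sum,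
      Finset.mul_sum]
    exact Finset.sum_le_sum fun i _ => (key i).2.2

lemma regular_flux_eq (hφ : ContDiff ℝ ∞ φ)
    {w : EuclideanSpace ℝ (Fin (m + 1)) → ℝ} (hw : ContDiff ℝ 1 w) (hwc : HasCompactSupport w)
    (hw0 : ∀ x, 0 ≤ w x) (hreg : ∀ x ∈ tsupport w, gradient φ x ≠ 0) :
    0 ≤ gradFlux φ w ∧
      nodalMass φ w = hausdorffFactor m * ENNReal.ofReal (gradFlux φ w) := by
  have key := fun (κ : ℝ) (h0 : 0 < κ) (h1 : κ < 1) =>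
    regular_flux_compare hφ h0 h1 hw hwc hw0 hreg
  have hB : (hausdorffFactor m : ℝ≥0∞) * ENNReal.ofReal (gradFlux φ w) ≠ ⊤ :=
    ENNReal.mul_ne_top ENNReal.coe_ne_top ENNReal.ofReal_ne_top
  have hA : nodalMass φ w ≠ ⊤ := ne_top_of_le_ne_top
    (ENNReal.mul_ne_top (ENNReal.pow_ne_top ENNReal.ofReal_ne_top) hB)
    (key (1 / 2) (by norm_num) (by norm_num)).2.1
  have hev : ∀ᶠ κ : ℝ in 𝓝[>] 0, 0 < κ ∧ κ < 1 := by
    filter_upwards [Ioo_mem_nhdsGT (zero_lt_one' ℝ)] with κ h using h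
  refine ⟨(key (1 / 2) (by norm_num) (by norm_num)).1, le_antisymm ?_ ?_⟩
  · have hc : ContinuousAt (fun κ : ℝ => (1 - κ)⁻¹) 0 :=
      ContinuousAt.inv₀ (by fun_prop) (by norm_num)
    have h1 : Tendsto (fun κ : ℝ => ENNReal.ofReal (1 - κ)⁻¹ ^ m *
        (hausdorffFactor m * ENNReal.ofReal (gradFlux φ w))) (𝓝[>] 0)
        (𝓝 (1 * (hausdorffFactor m * ENNReal.ofReal (gradFlux φ w)))) := by
      refine ENNReal.Tendsto.mul_const ?_ (Or.inr hB)
      have := ((ENNReal.continuous_pow m).tendsto _).comp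
        (ENNReal.tendsto_ofReal (hc.tendsto.mono_left (nhdsWithin_le_nhds (s := Ioi 0))))
      simpa [Function.comp_def] using this
    rw [one_mul] at h1
    exact ge_of_tendsto h1 (hev.mono fun κ h => (key κ h.1 h.2).2.1)
  · have hc : ContinuousAt (fun κ : ℝ => (1 + κ) / (1 - κ)) 0 :=
      ContinuousAt.div₀ (by fun_prop) (by fun_prop) (by norm_num)
    have h1 : Tendsto (fun κ : ℝ => ENNReal.ofReal ((1 + κ) / (1 - κ)) * nodalMass φ w) (𝓝[>] 0)
        (𝓝 (1 * nodalMass φ w)) := by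
      refine ENNReal.Tendsto.mul_const ?_ (Or.inr hA)
      have := ENNReal.tendsto_ofReal (hc.tendsto.mono_left (nhdsWithin_le_nhds (s := Ioi 0)))
      simpa using this
    rw [one_mul] at h1
    exact ge_of_tendsto h1 (hev.mono fun κ h => (key κ h.1 h.2).2.2)

end FluxFormula

/-! ### The flux formula across critical points -/

section CriticalPoints

variable {m : ℕ} {φ : EuclideanSpace ℝ (Fin (m + 1)) → ℝ}

/-- The derivative of `‖∇φ‖²` along `∇φ` is `O(‖∇φ‖²)`, locally uniformly. -/
lemma abs_sum_pd_normSq_le {n : ℕ} {φ : EuclideanSpace ℝ (Fin n) → ℝ} (hφ : ContDiff ℝ ∞ φ) (x) :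
    |∑ i, pd i φ x * pd i (fun y => ∑ j, pd j φ y ^ 2) x| ≤
      (∑ j, pd j φ x ^ 2) * ∑ i, ∑ j, 2 * |pd i (pd j φ) x| := by
  have hpdc : ∀ i, ContDiff ℝ 1 (pd i φ) := fun i => (pd_contDiff hφ i).of_le (by simp)
  have h1 : ∀ i, pd i (fun y => ∑ j, pd j φ y ^ 2) x =
      ∑ j, 2 * pd j φ x * pd i (pd j φ) x := fun i => by
    rw [pd_sum _ (fun j _ => (hpdc j).pow 2)]
    refine Finset.sum_congr rfl fun j _ => ?_
    simp only [pow_two]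
    rw [pd_mul (hpdc j) (hpdc j)]
    ring
  have h2 : ∀ i, pd i φ x ^ 2 ≤ ∑ j, pd j φ x ^ 2 := fun i =>
    Finset.single_le_sum (f := fun j => pd j φ x ^ 2) (fun j _ => sq_nonneg _) (Finset.mem_univ i)
  simp_rw [h1, Finset.mul_sum]
  refine (Finset.abs_sum_le_sum_abs _ _).trans (Finset.sum_le_sum fun i _ => ?_)
  refine (Finset.abs_sum_le_sum_abs _ _).trans (Finset.sum_le_sum fun j _ => ?_)
  have h3 : |pd i φ x * pd j φ x| ≤ ∑ j, pd j φ x ^ 2 := by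
    rw [abs_le]
    constructor <;> nlinarith [h2 i, h2 j, sq_nonneg (pd i φ x + pd j φ x),
      sq_nonneg (pd i φ x - pd j φ x)]
  have h4 : pd i φ x * (2 * pd j φ x * pd i (pd j φ) x) =
      (pd i φ x * pd j φ x) * (2 * pd i (pd j φ) x) := by ring
  rw [h4, abs_mul, abs_mul (2 : ℝ), abs_two]
  exact mul_le_mul_of_nonneg_right h3 (by positivity)

/-- At almost every critical point all second derivatives vanish as well, so critical points do not
contribute to `∫ div (w ∇φ)`. -/
lemma ae_divg_eq_zero_of_critical {n : ℕ} {φ w : EuclideanSpace ℝ (Fin n) → ℝ}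
    (hφ : ContDiff ℝ ∞ φ) (hw : ContDiff ℝ 1 w) :
    ∀ᵐ x, ¬ 0 < ∑ i, pd i φ x ^ 2 → divg (fun i y => w y * pd i φ y) x = 0 := by
  have hpdc : ∀ i, ContDiff ℝ 1 (pd i φ) := fun i => (pd_contDiff hφ i).of_le (by simp)
  have h := ae_all_iff.2 fun i => ae_pd_eq_zero_of_eq_zero (pd_contDiff hφ i) i
  filter_upwards [h] with x hx hq
  have h0 : ∀ i, pd i φ x = 0 := fun i => by
    have h1 := Finset.single_le_sum (f := fun j => pd j φ x ^ 2) (fun j _ => sq_nonneg _)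
      (Finset.mem_univ i)
    have h2 : pd i φ x ^ 2 = 0 := le_antisymm (h1.trans (not_lt.1 hq)) (sq_nonneg _)
    exact pow_eq_zero_iff (two_ne_zero) |>.1 h2
  unfold divg
  refine Finset.sum_eq_zero fun i _ => ?_
  rw [pd_mul hw (hpdc i), h0 i, hx i (h0 i)]
  ring

lemma gradFlux_cutoff_tendsto {n : ℕ} {φ w : EuclideanSpace ℝ (Fin n) → ℝ}
    (hφ : ContDiff ℝ ∞ φ) (hw : ContDiff ℝ 1 w) (hwc : HasCompactSupport w) :
    Tendsto (fun k : ℕ => gradFlux φ fun x =>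
      smoothTransition ((k : ℝ) * (∑ i, pd i φ x ^ 2) - 1) * w x) atTop (𝓝 (gradFlux φ w)) := by
  have hpdc : ∀ i, ContDiff ℝ 1 (pd i φ) := fun i => (pd_contDiff hφ i).of_le (by simp)
  set q : EuclideanSpace ℝ (Fin n) → ℝ := fun x => ∑ i, pd i φ x ^ 2 with hq
  have hqc : ContDiff ℝ 1 q := ContDiff.sum fun i _ => (hpdc i).pow 2
  have hmpos : MeasurableSet {x | 0 < φ x} :=
    (isOpen_lt continuous_const hφ.continuous).measurableSet
  set D := divg (fun i y => w y * pd i φ y) with hD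
  have hDi : Integrable D :=
    divg_integrable (fun i => hw.mul (hpdc i)) fun i => hwc.mul_right
  set R : EuclideanSpace ℝ (Fin n) → ℝ := fun x => ∑ i, pd i φ x * pd i q x with hR
  set r : EuclideanSpace ℝ (Fin n) → ℝ := fun x => ∑ i, ∑ j, 2 * |pd i (pd j φ) x| with hr
  have hRr : ∀ x, |R x| ≤ q x * r x := abs_sum_pd_normSq_le hφ
  have hq0 : ∀ x, 0 ≤ q x := fun x => Finset.sum_nonneg fun i _ => sq_nonneg _
  have hr0 : ∀ x, 0 ≤ r x := fun x => Finset.sum_nonneg fun i _ => Finset.sum_nonneg fun j _ => by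
    positivity
  have hrc : Continuous r := continuous_finsetSum _ fun i _ => continuous_finsetSum _ fun j _ =>
    continuous_const.mul (pd_continuous (hpdc j) i).abs
  have hRc : Continuous R := continuous_finsetSum _ fun i _ =>
    (hpdc i).continuous.mul (pd_continuous hqc i)
  set H : ℕ → EuclideanSpace ℝ (Fin n) → ℝ := fun k x =>
    (k : ℝ) * deriv smoothTransition ((k : ℝ) * q x - 1) * (w x * R x) with hH
  have hHc : ∀ k, Continuous (H k) := fun k =>
    (continuous_const.mul ((smoothTransition_contDiff_one.continuous_deriv (by simp)).comp
      ((continuous_const.mul hqc.continuous).sub continuous_const))).mul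
        (hw.continuous.mul hRc)
  have hdiv : ∀ (k : ℕ) x, divg (fun i y => smoothTransition ((k : ℝ) * q y - 1) * w y * pd i φ y) x
      = smoothTransition ((k : ℝ) * q x - 1) * D x + H k x := by
    intro k x
    simp only [mul_assoc]
    rw [divg_mul (f := fun y => smoothTransition ((k : ℝ) * q y - 1))
      ((contDiff_smoothTransition_comp k 1).comp hqc) (fun i => hw.mul (hpdc i))]
    refine congrArg₂ (· + ·) rfl ?_
    change _ = (k : ℝ) * deriv smoothTransition ((k : ℝ) * q x - 1) *
      (w x * ∑ i, pd i φ x * pd i q x)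
    rw [← mul_assoc, Finset.mul_sum]
    refine Finset.sum_congr rfl fun i _ => ?_
    rw [pd_comp (s := fun t => smoothTransition ((k : ℝ) * t - 1))
      (contDiff_smoothTransition_comp k 1) hqc, deriv_smoothTransition_comp]
    ring
  have hbound : ∀ (k : ℕ) x, |H k x| ≤
      |(k : ℝ) * q x * deriv smoothTransition ((k : ℝ) * q x - 1)| * (|w x| * r x) := by
    intro k x
    simp only [hH]
    rw [abs_mul, abs_mul (w x), abs_mul (k : ℝ), abs_mul, abs_mul (k : ℝ), abs_of_nonneg (hq0 x)]
    have := mul_le_mul_of_nonneg_left (hRr x) (mul_nonneg (mul_nonneg (abs_nonneg (k : ℝ))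
      (abs_nonneg (deriv smoothTransition ((k : ℝ) * q x - 1)))) (abs_nonneg (w x)))
    linarith
  obtain ⟨C, hC0, hC⟩ := exists_bound_deriv_smoothTransition
  have hwr : Integrable fun x => C * (|w x| * r x) := by
    refine Integrable.const_mul ?_ C
    refine (hw.continuous.abs.mul hrc).integrable_of_hasCompactSupport ?_
    exact (hwc.comp_left (g := fun t : ℝ => |t|) abs_zero).mul_right
  have hHb : ∀ (k : ℕ) x, |H k x| ≤ C * (|w x| * r x) := fun k x => by
    refine (hbound k x).trans (mul_le_mul_of_nonneg_right ?_ (mul_nonneg (abs_nonneg _) (hr0 x)))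
    have := (hC ((k : ℝ) * q x - 1)).1
    rwa [sub_add_cancel] at this
  have hHi : ∀ k, Integrable (H k) := fun k =>
    hwr.mono' (hHc k).aestronglyMeasurable (Eventually.of_forall (hHb k))
  have hSi : ∀ k : ℕ, Integrable fun x => smoothTransition ((k : ℝ) * q x - 1) * D x := fun k => by
    refine hDi.norm.mono' (((contDiff_smoothTransition_comp k 1).comp
      hqc).continuous.aestronglyMeasurable.mul hDi.aestronglyMeasurable)
      (Eventually.of_forall fun x => ?_)
    rw [norm_mul, Real.norm_of_nonneg (smoothTransition.nonneg _)]
    exact mul_le_of_le_one_left (norm_nonneg _) (smoothTransition.le_one _)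
  have hlim1 : Tendsto (fun k : ℕ => ∫ x in {x | 0 < φ x},
      smoothTransition ((k : ℝ) * q x - 1) * D x) atTop (𝓝 (∫ x in {x | 0 < φ x}, D x)) := by
    have h1 := tendsto_integral_cutoff hqc.continuous (hDi.indicator hmpos) 1 zero_le_one
    have h2 : ∫ x in {x | 0 < q x}, {x | 0 < φ x}.indicator D x = ∫ x in {x | 0 < φ x}, D x := by
      rw [← integral_indicator hmpos]
      refine setIntegral_eq_integral_of_ae_compl_eq_zero ?_
      filter_upwards [ae_divg_eq_zero_of_critical hφ hw] with x hx hxq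
      by_cases hxp : 0 < φ x
      · rw [indicator_of_mem (show x ∈ {x | 0 < φ x} from hxp)]
        exact hx hxq
      · exact indicator_of_notMem (show x ∉ {x | 0 < φ x} from hxp) _
    rw [h2] at h1
    refine h1.congr fun k => ?_
    rw [← integral_indicator hmpos]
    refine integral_congr_ae (Eventually.of_forall fun x => ?_)
    by_cases hxp : 0 < φ x <;> simp [hxp]
  have hlim2 : Tendsto (fun k : ℕ => ∫ x in {x | 0 < φ x}, H k x) atTop
      (𝓝 (∫ x in {x | 0 < φ x}, (0 : ℝ))) := by
    refine tendsto_integral_of_dominated_convergence (fun x => C * (|w x| * r x))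
      (fun k => (hHc k).aestronglyMeasurable) hwr.integrableOn
      (fun k => Eventually.of_forall (hHb k)) (Eventually.of_forall fun x => ?_)
    refine squeeze_zero_norm (hbound · x) ?_
    have := ((tendsto_deriv_smoothTransition_mul 1 zero_le_one (q x)).abs).mul_const (|w x| * r x)
    simpa using this
  have := (hlim1.add hlim2).neg
  rw [integral_zero, add_zero] at this
  refine this.congr fun k => ?_
  unfold gradFlux
  rw [← integral_add (hSi k).integrableOn (hHi k).integrableOn]
  congr 2
  ext x
  exact (hdiv k x).symm

/-- The flux formula: for a nonnegative test function, `∫_{φ = 0} w ‖∇φ‖ dμH` is the universal factor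
times `-∫_{φ > 0} div (w ∇φ)`. No regularity of the zero set is assumed. -/
theorem nodalMass_eq (hφ : ContDiff ℝ ∞ φ)
    {w : EuclideanSpace ℝ (Fin (m + 1)) → ℝ} (hw : ContDiff ℝ 1 w) (hwc : HasCompactSupport w)
    (hw0 : ∀ x, 0 ≤ w x) :
    0 ≤ gradFlux φ w ∧
      nodalMass φ w = hausdorffFactor m * ENNReal.ofReal (gradFlux φ w) := by
  have hpdc : ∀ i, ContDiff ℝ 1 (pd i φ) := fun i => (pd_contDiff hφ i).of_le (by simp)
  have hlim := gradFlux_cutoff_tendsto hφ hw hwc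
  set q : EuclideanSpace ℝ (Fin (m + 1)) → ℝ := fun x => ∑ i, pd i φ x ^ 2 with hq
  have hqc : ContDiff ℝ 1 q := ContDiff.sum fun i _ => (hpdc i).pow 2
  have hqn : ∀ x, q x = ‖gradient φ x‖ ^ 2 := fun x => (norm_gradient_sq x).symm
  have hq0 : ∀ x, 0 ≤ q x := fun x => Finset.sum_nonneg fun i _ => sq_nonneg _
  set v : ℕ → EuclideanSpace ℝ (Fin (m + 1)) → ℝ := fun k x =>
    smoothTransition ((k : ℝ) * q x - 1) * w x with hv
  have hv1 : ∀ k, ContDiff ℝ 1 (v k) := fun k =>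
    ((contDiff_smoothTransition_comp k 1).comp hqc).mul hw
  have hreg : ∀ k, ∀ x ∈ tsupport (v k), gradient φ x ≠ 0 := by
    intro k x hx h0
    have hcl : IsClosed {x | 1 ≤ (k : ℝ) * q x} :=
      isClosed_le continuous_const (continuous_const.mul hqc.continuous)
    have hss : tsupport (v k) ⊆ {x | 1 ≤ (k : ℝ) * q x} := by
      refine closure_minimal (fun y hy => ?_) hcl
      by_contra hcon
      refine hy ?_
      simp only [hv]
      rw [smoothTransition.zero_of_nonpos (by linarith [not_le.1 (show ¬ 1 ≤ (k : ℝ) * q y from hcon)]), zero_mul]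
    have h1 : 1 ≤ (k : ℝ) * q x := hss hx
    rw [hqn, h0, norm_zero] at h1
    norm_num at h1
  have key := fun k => regular_flux_eq hφ (hv1 k) hwc.mul_left
    (fun x => mul_nonneg (smoothTransition.nonneg _) (hw0 x)) (hreg k)
  refine ⟨ge_of_tendsto' hlim fun k => (key k).1, ?_⟩
  have h1 : Tendsto (fun k => nodalMass φ (v k)) atTop (𝓝 (nodalMass φ w)) := by
    refine lintegral_tendsto_of_tendsto_of_monotone (fun k => ?_) (Eventually.of_forall fun x => ?_)
      (Eventually.of_forall fun x => ?_)
    · exact ((hv1 k).continuous.mul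
        (continuous_gradient (hφ.of_le (by simp))).norm).measurable.ennreal_ofReal.aemeasurable
    · intro k l hkl
      refine ENNReal.ofReal_le_ofReal (mul_le_mul_of_nonneg_right
        (mul_le_mul_of_nonneg_right (smoothTransition.monotone ?_) (hw0 x)) (norm_nonneg _))
      have : (k : ℝ) ≤ l := by exact_mod_cast hkl
      linarith [mul_le_mul_of_nonneg_right this (hq0 x)]
    · refine ENNReal.tendsto_ofReal ?_
      by_cases h0 : gradient φ x = 0
      · simp [h0]
      · have hp : 0 < q x := by rw [hqn]; positivity
        have := ((tendsto_smoothTransition_mul 1 zero_le_one (q x)).mul_const (w x)).mul_const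
          ‖gradient φ x‖
        rwa [if_pos hp, one_mul] at this
  have h2 : Tendsto (fun k => nodalMass φ (v k)) atTop
      (𝓝 (hausdorffFactor m * ENNReal.ofReal (gradFlux φ w))) := by
    refine (ENNReal.Tendsto.const_mul (ENNReal.tendsto_ofReal hlim)
      (Or.inr ENNReal.coe_ne_top)).congr fun k => ?_
    exact (key k).2.symm
  exact tendsto_nhds_unique h1 h2

end CriticalPoints

/-! ### Lattice cutoff and unfolding -/

section Unfolding

variable {n : ℕ}

/-- The lattice vector of `ℝⁿ` with integer coordinates `k`. -/
def latticeVec {n : ℕ} (k : Fin n → ℤ) : EuclideanSpace ℝ (Fin n) :=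
  (WithLp.equiv 2 (Fin n → ℝ)).symm fun i => (k i : ℝ)

@[simp] lemma latticeVec_apply (k : Fin n → ℤ) (i : Fin n) : latticeVec k i = k i := rfl

/-- Finitely many lattice translates of `Q` covering `[-1, 1]ⁿ`. -/
def tiles (n : ℕ) : Finset (Fin n → ℤ) := Fintype.piFinset fun _ => Finset.Icc (-2) 1

/-- The one-dimensional profile: a smooth nonnegative bump supported in `[-1, 1]` whose integer
translates telescope to `1`. -/
def bump (t : ℝ) : ℝ := smoothTransition (t + 1) - smoothTransition t

/-- A smooth compactly supported function whose lattice translates sum to `1` near `Q`. -/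
def latticeCutoff {n : ℕ} (x : EuclideanSpace ℝ (Fin n)) : ℝ := ∏ i, bump (x i)

lemma bump_nonneg (t : ℝ) : 0 ≤ bump t :=
  sub_nonneg.2 (smoothTransition.monotone (by linarith))

lemma bump_eq_zero {t : ℝ} (ht : t ∉ Icc (-1 : ℝ) 1) : bump t = 0 := by
  unfold bump
  rcases lt_or_ge t (-1) with h | h
  · rw [smoothTransition.zero_of_nonpos (by linarith), smoothTransition.zero_of_nonpos (by linarith),
      sub_zero]
  · have h1 : 1 < t := by
      by_contra hc
      exact ht ⟨h, not_lt.1 hc⟩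
    rw [smoothTransition.one_of_one_le (by linarith), smoothTransition.one_of_one_le (by linarith),
      sub_self]

lemma sum_bump {t : ℝ} (ht : t ∈ Ioo (-1 : ℝ) 2) :
    ∑ j ∈ Finset.Icc (-2 : ℤ) 1, bump (t + j) = 1 := by
  have h : Finset.Icc (-2 : ℤ) 1 = {-2, -1, 0, 1} := by decide
  rw [h, Finset.sum_insert (by decide), Finset.sum_insert (by decide),
    Finset.sum_insert (by decide), Finset.sum_singleton]
  unfold bump
  push_cast
  have h1 : smoothTransition (t + 1 + 1) = 1 := smoothTransition.one_of_one_le (by linarith [ht.1])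
  have h2 : smoothTransition (t + -2) = 0 := smoothTransition.zero_of_nonpos (by linarith [ht.2])
  have e1 : t + -2 + 1 = t + -1 := by ring
  have e2 : t + -1 + 1 = t + 0 := by ring
  have e3 : t + 0 + 1 = t + 1 := by ring
  rw [e1, e2, e3, h1, h2]
  ring

lemma latticeCutoff_contDiff : ContDiff ℝ 1 (latticeCutoff (n := n)) := by
  have hb : ContDiff ℝ 1 bump :=
    (smoothTransition_contDiff_one.comp (contDiff_id.add contDiff_const)).sub
      smoothTransition_contDiff_one
  exact contDiff_prod fun i _ => hb.comp (contDiff_piLp_apply (i := i) 2)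

lemma latticeCutoff_nonneg (x : EuclideanSpace ℝ (Fin n)) : 0 ≤ latticeCutoff x :=
  Finset.prod_nonneg fun _ _ => bump_nonneg _

lemma tsupport_latticeCutoff :
    tsupport (latticeCutoff (n := n)) ⊆ {x | ∀ i, x i ∈ Icc (-1 : ℝ) 1} := by
  refine closure_minimal (fun x hx i => ?_) ?_
  · by_contra hc
    exact hx (Finset.prod_eq_zero (Finset.mem_univ i) (bump_eq_zero hc))
  · rw [ofPred_forall]
    exact isClosed_iInter fun i => isClosed_Icc.preimage (by fun_prop)

lemma latticeCutoff_hasCompactSupport : HasCompactSupport (latticeCutoff (n := n)) := by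
  refine HasCompactSupport.of_support_subset_isCompact
    (isCompact_closedBall (0 : EuclideanSpace ℝ (Fin n)) (√n)) fun x hx => ?_
  have h := tsupport_latticeCutoff (subset_tsupport _ hx)
  rw [mem_closedBall_zero_iff, EuclideanSpace.norm_eq]
  refine Real.sqrt_le_sqrt ?_
  calc ∑ i, ‖x i‖ ^ 2 ≤ ∑ _i : Fin n, (1 : ℝ) := by
        refine Finset.sum_le_sum fun i _ => ?_
        rw [Real.norm_eq_abs]
        exact pow_le_one₀ (abs_nonneg _) (abs_le.2 (h i))
    _ = n := by simp

lemma sum_latticeCutoff {x : EuclideanSpace ℝ (Fin n)} (hx : ∀ i, x i ∈ Ioo (-1 : ℝ) 2) :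
    ∑ k ∈ tiles n, latticeCutoff (x + latticeVec k) = 1 := by
  unfold tiles latticeCutoff
  have := Finset.prod_univ_sum (fun _ : Fin n => Finset.Icc (-2 : ℤ) 1)
    fun i j => bump (x i + j)
  simp only [PiLp.add_apply, latticeVec_apply]
  rw [← this]
  exact Finset.prod_eq_one fun i _ => sum_bump (hx i)

lemma pd_comp_add (f : EuclideanSpace ℝ (Fin n) → ℝ) (i : Fin n) (x v) :
    pd i (fun y => f (y + v)) x = pd i f (x + v) := by
  unfold pd
  rw [fderiv_comp_add_right]

lemma sum_pd_latticeCutoff {x : EuclideanSpace ℝ (Fin n)} (hx : x ∈ Qcube n) (i : Fin n) :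
    ∑ k ∈ tiles n, pd i latticeCutoff (x + latticeVec k) = 0 := by
  have h1 := pd_sum (tiles n) (F := fun k y => latticeCutoff (y + latticeVec k))
    (fun k _ => latticeCutoff_contDiff.comp (contDiff_id.add contDiff_const)) i x
  simp only [pd_comp_add] at h1
  rw [← h1]
  have hopen : IsOpen {y : EuclideanSpace ℝ (Fin n) | ∀ i, y i ∈ Ioo (-1 : ℝ) 2} := by
    rw [ofPred_forall]
    exact isOpen_iInter_of_finite fun i => isOpen_Ioo.preimage (by fun_prop)
  have hmem : x ∈ {y : EuclideanSpace ℝ (Fin n) | ∀ i, y i ∈ Ioo (-1 : ℝ) 2} := fun i =>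
    ⟨by linarith [(hx i).1], by linarith [(hx i).2]⟩
  have h2 : (fun y => ∑ k ∈ tiles n, latticeCutoff (y + latticeVec k)) =ᶠ[𝓝 x] fun _ => (1 : ℝ) := by
    filter_upwards [hopen.mem_nhds hmem] with y hy using sum_latticeCutoff hy
  unfold pd
  rw [h2.fderiv_eq]
  simp

lemma measurableSet_Qcube : MeasurableSet (Qcube n) := by
  unfold Qcube
  rw [ofPred_forall]
  exact MeasurableSet.iInter fun i => measurableSet_Ico.preimage
    (by fun_prop : Continuous fun x : EuclideanSpace ℝ (Fin n) => x i).measurable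

/-- Unfolding: an integral over `ℝⁿ` of a periodic function against a function supported in
`[-1, 1]ⁿ` is an integral over `Q`, for any measure invariant under the lattice. -/
lemma integral_unfold {μ : Measure (EuclideanSpace ℝ (Fin n))}
    (hμ : ∀ k, MeasurePreserving (fun x => x + latticeVec k) μ μ)
    {χ f : EuclideanSpace ℝ (Fin n) → ℝ} (hf : ∀ x k, f (x + latticeVec k) = f x)
    (hi : Integrable (fun x => χ x * f x) μ) (hs : ∀ x, χ x ≠ 0 → ∀ i, x i ∈ Icc (-1 : ℝ) 1) :
    ∫ x, χ x * f x ∂μ = ∫ x in Qcube n, (∑ k ∈ tiles n, χ (x + latticeVec k)) * f x ∂μ := by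
  set T : (Fin n → ℤ) → Set (EuclideanSpace ℝ (Fin n)) := fun k => {x | ∀ i, ⌊x i⌋ = k i} with hT
  have hTm : ∀ k, MeasurableSet (T k) := fun k => by
    simp only [hT]
    rw [ofPred_forall]
    refine MeasurableSet.iInter fun i => ?_
    exact (Int.measurable_floor.comp (by fun_prop : Continuous fun x : EuclideanSpace ℝ (Fin n) =>
      x i).measurable) (measurableSet_singleton (k i))
  have hpre : ∀ k, (fun x => x + latticeVec k) ⁻¹' T k = Qcube n := by
    intro k
    ext x
    simp only [hT, Qcube, mem_preimage, mem_ofPred_eq, PiLp.add_apply, latticeVec_apply,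
      Int.floor_add_intCast, add_eq_right, Int.floor_eq_zero_iff]
  have hemb : ∀ k, MeasurableEmbedding fun x : EuclideanSpace ℝ (Fin n) => x + latticeVec k :=
    fun k => measurableEmbedding_addRight _
  have hpiece : ∀ k, ∫ x in T k, χ x * f x ∂μ = ∫ x in Qcube n, χ (x + latticeVec k) * f x ∂μ := by
    intro k
    rw [← (hμ k).setIntegral_preimage_emb (hemb k), hpre k]
    simp only [hf]
  have hpiecei : ∀ k, IntegrableOn (fun x => χ (x + latticeVec k) * f x) (Qcube n) μ := by
    intro k
    have := ((hμ k).integrable_comp_emb (hemb k)).2 hi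
    simp only [Function.comp_def, hf] at this
    exact this.integrableOn
  have hcover : ∀ x, x ∉ ⋃ k ∈ tiles n, T k → χ x * f x = 0 := by
    intro x hx
    by_contra hc
    have hχ := hs x (left_ne_zero_of_mul hc)
    refine hx (mem_iUnion₂.2 ⟨fun i => ⌊x i⌋, ?_, fun i => rfl⟩)
    rw [tiles, Fintype.mem_piFinset]
    intro i
    rw [Finset.mem_Icc]
    constructor
    · rw [Int.le_floor]; push_cast; linarith [(hχ i).1]
    · have h2 : (⌊x i⌋ : ℝ) ≤ 1 := (Int.floor_le _).trans (hχ i).2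
      exact_mod_cast h2
  rw [← setIntegral_eq_integral_of_forall_compl_eq_zero hcover,
    integral_biUnion_finset _ (fun k _ => hTm k) ?_ fun k _ => hi.integrableOn]
  · simp_rw [hpiece, Finset.sum_mul]
    rw [integral_finsetSum _ fun k _ => hpiecei k]
  · intro k _ l _ hkl
    refine Set.disjoint_left.2 fun x hx hx' => hkl ?_
    ext i
    rw [← hx i, hx' i]

end Unfolding

/-! ### Vanishing of the flux for equal eigenvalues -/

section Conclusion

lemma nodal_integral_of_nonneg {m : ℕ} {φ w : EuclideanSpace ℝ (Fin (m + 1)) → ℝ}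
    (hφ : ContDiff ℝ ∞ φ) (hw : ContDiff ℝ 1 w) (hwc : HasCompactSupport w) (hw0 : ∀ x, 0 ≤ w x) :
    IntegrableOn (fun x => w x * ‖gradient φ x‖) {x | φ x = 0} μH[(m : ℝ)] ∧
    ∫ x in {x | φ x = 0}, w x * ‖gradient φ x‖ ∂μH[(m : ℝ)] =
      hausdorffFactor m * gradFlux φ w := by
  obtain ⟨hJ, hA⟩ := nodalMass_eq hφ hw hwc hw0
  have hc : Continuous fun x => w x * ‖gradient φ x‖ :=
    hw.continuous.mul (continuous_gradient (hφ.of_le (by simp))).norm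
  have h0 : ∀ x, 0 ≤ w x * ‖gradient φ x‖ := fun x => mul_nonneg (hw0 x) (norm_nonneg _)
  unfold nodalMass at hA
  constructor
  · refine ⟨hc.measurable.aestronglyMeasurable, ?_⟩
    rw [hasFiniteIntegral_iff_ofReal (Eventually.of_forall h0), hA]
    exact ENNReal.mul_lt_top ENNReal.coe_lt_top ENNReal.ofReal_lt_top
  · rw [integral_eq_lintegral_of_nonneg_ae (Eventually.of_forall h0)
      hc.measurable.aestronglyMeasurable, hA, ENNReal.toReal_mul, ENNReal.toReal_ofReal hJ]
    rfl

/-- The flux formula for a signed test function `χ ψ`, reduced to nonnegative weights by adding a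
large multiple of `χ`. -/
lemma nodal_integral_mul {m : ℕ} {φ χ ψ : EuclideanSpace ℝ (Fin (m + 1)) → ℝ}
    (hφ : ContDiff ℝ ∞ φ) (hχ : ContDiff ℝ 1 χ) (hχc : HasCompactSupport χ) (hχ0 : ∀ x, 0 ≤ χ x)
    (hψ : ContDiff ℝ 1 ψ) :
    IntegrableOn (fun x => χ x * ψ x * ‖gradient φ x‖) {x | φ x = 0} μH[(m : ℝ)] ∧
    ∫ x in {x | φ x = 0}, χ x * ψ x * ‖gradient φ x‖ ∂μH[(m : ℝ)] =
      hausdorffFactor m * gradFlux φ (fun x => χ x * ψ x) := by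
  obtain ⟨M, hM⟩ := IsCompact.exists_bound_of_continuousOn (hχc : IsCompact (tsupport χ))
    hψ.continuous.continuousOn
  set w₂ : EuclideanSpace ℝ (Fin (m + 1)) → ℝ := fun x => χ x * |M| with hw₂
  set w₁ : EuclideanSpace ℝ (Fin (m + 1)) → ℝ := fun x => χ x * (ψ x + |M|) with hw₁
  have hu : ContDiff ℝ 1 fun x => χ x * ψ x := hχ.mul hψ
  have h2 := nodal_integral_of_nonneg hφ (w := w₂) (hχ.mul contDiff_const) hχc.mul_right
    fun x => mul_nonneg (hχ0 x) (abs_nonneg _)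
  have h1 := nodal_integral_of_nonneg hφ (w := w₁) (hχ.mul (hψ.add contDiff_const)) hχc.mul_right
    fun x => by
      by_cases hx : x ∈ tsupport χ
      · refine mul_nonneg (hχ0 x) ?_
        have h3 := (abs_le.1 (hM x hx)).1
        linarith [le_abs_self M]
      · simp [hw₁, image_eq_zero_of_notMem_tsupport hx]
  have hfl : gradFlux φ w₁ = gradFlux φ (fun x => χ x * ψ x) + gradFlux φ w₂ := by
    have := gradFlux_sum (Finset.univ : Finset (Fin 2)) hφ (w := ![fun x => χ x * ψ x, w₂])
      (by simp [Fin.forall_fin_two, hu, hw₂, hχ.mul contDiff_const])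
      (by
        intro i _
        fin_cases i
        · exact hχc.mul_right
        · exact hχc.mul_right)
    simp only [Fin.sum_univ_two, Matrix.cons_val_zero, Matrix.cons_val_one] at this
    rw [← this]
    congr 1
    ext x
    simp only [hw₁, hw₂]
    ring
  have hdecomp : (fun x => χ x * ψ x * ‖gradient φ x‖) =
      fun x => w₁ x * ‖gradient φ x‖ - w₂ x * ‖gradient φ x‖ := by
    ext x
    simp only [hw₁, hw₂]
    ring
  rw [hdecomp]
  refine ⟨h1.1.sub h2.1, ?_⟩
  rw [integral_sub h1.1 h2.1, h1.2, h2.2, hfl]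
  ring

lemma pd_periodic {n : ℕ} {φ : EuclideanSpace ℝ (Fin n) → ℝ}
    (h : ∀ x k, φ (x + latticeVec k) = φ x) (i : Fin n) (x k) :
    pd i φ (x + latticeVec k) = pd i φ x := by
  rw [← pd_comp_add]
  simp only [h]

lemma measurePreserving_restrict {n : ℕ} {μ : Measure (EuclideanSpace ℝ (Fin n))}
    (hμ : ∀ k, MeasurePreserving (fun x => x + latticeVec k) μ μ)
    {s : Set (EuclideanSpace ℝ (Fin n))} (hs : MeasurableSet s)
    (hinv : ∀ x k, x + latticeVec k ∈ s ↔ x ∈ s) (k : Fin n → ℤ) :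
    MeasurePreserving (fun x => x + latticeVec k) (μ.restrict s) (μ.restrict s) := by
  have h := (hμ k).restrict_preimage hs
  have e : (fun x => x + latticeVec k) ⁻¹' s = s := by
    ext x
    exact hinv x k
  rwa [e] at h

/-- Since `ψ ∇φ - φ ∇ψ` is periodic and, for equal eigenvalues, divergence free, the flux of `χ ψ ∇φ`
vanishes: the divergence of its `χ`-multiple unfolds to `∇(∑ₖ χ(· + k)) = 0` on `Q`. -/
lemma gradFlux_latticeCutoff_eq_zero {n : ℕ} {φ ψ : EuclideanSpace ℝ (Fin n) → ℝ}
    (hφ : ContDiff ℝ ∞ φ) (hψ : ContDiff ℝ ∞ ψ)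
    (hφp : ∀ x k, φ (x + latticeVec k) = φ x) (hψp : ∀ x k, ψ (x + latticeVec k) = ψ x)
    (heig : ∀ x, ψ x * lap φ x = φ x * lap ψ x) :
    gradFlux φ (fun x => latticeCutoff x * ψ x) = 0 := by
  have hφ1 : ContDiff ℝ 1 φ := hφ.of_le (by simp)
  have hψ1 : ContDiff ℝ 1 ψ := hψ.of_le (by simp)
  have hpφ : ∀ i, ContDiff ℝ 1 (pd i φ) := fun i => (pd_contDiff hφ i).of_le (by simp)
  have hpψ : ∀ i, ContDiff ℝ 1 (pd i ψ) := fun i => (pd_contDiff hψ i).of_le (by simp)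
  have hχ := latticeCutoff_contDiff (n := n)
  have hχc := latticeCutoff_hasCompactSupport (n := n)
  set χ : EuclideanSpace ℝ (Fin n) → ℝ := latticeCutoff with hχdef
  have hmpos : MeasurableSet {x | 0 < φ x} :=
    (isOpen_lt continuous_const hφ.continuous).measurableSet
  set F₁ : Fin n → EuclideanSpace ℝ (Fin n) → ℝ := fun i y => χ y * ψ y * pd i φ y with hF₁
  set F₂ : Fin n → EuclideanSpace ℝ (Fin n) → ℝ := fun i y => χ y * φ y * pd i ψ y with hF₂
  have hF₁c : ∀ i, ContDiff ℝ 1 (F₁ i) := fun i => (hχ.mul hψ1).mul (hpφ i)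
  have hF₂c : ∀ i, ContDiff ℝ 1 (F₂ i) := fun i => (hχ.mul hφ1).mul (hpψ i)
  have hF₁s : ∀ i, HasCompactSupport (F₁ i) := fun i => hχc.mul_right.mul_right
  have hF₂s : ∀ i, HasCompactSupport (F₂ i) := fun i => hχc.mul_right.mul_right
  have hzero : ∫ x in {x | 0 < φ x}, divg F₂ x = 0 := by
    refine integral_divg_pos_eq_zero (g := fun x => χ x * ∑ i, pd i ψ x * pd i φ x) hφ1 hF₂c hF₂s
      ?_ fun x => ?_
    · refine Continuous.integrable_of_hasCompactSupport ?_ hχc.mul_right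
      exact hχ.continuous.mul (continuous_finsetSum _ fun i _ =>
        (hpψ i).continuous.mul (hpφ i).continuous)
    · simp only [hF₂, Finset.mul_sum]
      exact Finset.sum_congr rfl fun i _ => by ring
  set X : Fin n → EuclideanSpace ℝ (Fin n) → ℝ := fun i y => ψ y * pd i φ y - φ y * pd i ψ y
    with hX
  have hXc : ∀ i, ContDiff ℝ 1 (X i) := fun i => (hψ1.mul (hpφ i)).sub (hφ1.mul (hpψ i))
  have hdivX : ∀ x, divg X x = 0 := by
    intro x
    have h1 : ∀ i, pd i (X i) x = ψ x * pd i (pd i φ) x - φ x * pd i (pd i ψ) x := fun i => by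
      simp only [hX]
      rw [pd_sub (hψ1.mul (hpφ i)) (hφ1.mul (hpψ i)), pd_mul hψ1 (hpφ i), pd_mul hφ1 (hpψ i)]
      ring
    unfold divg
    simp_rw [h1]
    rw [Finset.sum_sub_distrib, ← Finset.mul_sum, ← Finset.mul_sum]
    exact sub_eq_zero.2 (heig x)
  have hdiff : ∀ x, divg F₁ x - divg F₂ x = ∑ i, pd i χ x * X i x := by
    intro x
    have h1 : divg F₁ x - divg F₂ x = divg (fun i y => χ y * X i y) x := by
      unfold divg
      rw [← Finset.sum_sub_distrib]
      refine Finset.sum_congr rfl fun i _ => ?_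
      rw [← pd_sub (hF₁c i) (hF₂c i)]
      congr 1
      ext y
      simp only [hF₁, hF₂, hX]
      ring
    rw [h1, divg_mul hχ hXc, hdivX, mul_zero, zero_add]
    exact Finset.sum_congr rfl fun i _ => mul_comm _ _
  have hμ := measurePreserving_restrict (n := n) (μ := volume)
    (fun k => measurePreserving_add_right volume (latticeVec k)) hmpos
    fun x k => by simp only [mem_ofPred_eq, hφp]
  have hpiecei : ∀ i, Integrable (fun x => pd i χ x * X i x) := fun i =>
    ((pd_continuous hχ i).mul (hXc i).continuous).integrable_of_hasCompactSupport
      (pd_hasCompactSupport hχc i).mul_right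
  have hpiece : ∀ i, ∫ x in {x | 0 < φ x}, pd i χ x * X i x = 0 := by
    intro i
    rw [integral_unfold hμ (χ := pd i χ) (f := X i)
      (fun x k => by simp only [hX, hφp, hψp, pd_periodic hφp, pd_periodic hψp])
      (hpiecei i).integrableOn (fun x hx => tsupport_latticeCutoff ?_)]
    · refine setIntegral_eq_zero_of_forall_eq_zero fun x hx => ?_
      rw [sum_pd_latticeCutoff hx, zero_mul]
    · by_contra hc
      refine hx ?_
      unfold pd
      rw [(notMem_tsupport_iff_eventuallyEq.1 hc).fderiv_eq]
      simp
  unfold gradFlux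
  rw [neg_eq_zero]
  change ∫ x in {x | 0 < φ x}, divg F₁ x = 0
  have h2 : ∫ x in {x | 0 < φ x}, (divg F₁ x - divg F₂ x) = 0 := by
    simp_rw [hdiff]
    rw [integral_finsetSum _ fun i _ => (hpiecei i).integrableOn]
    exact Finset.sum_eq_zero fun i _ => hpiece i
  rwa [integral_sub (divg_integrable hF₁c hF₁s).integrableOn
    (divg_integrable hF₂c hF₂s).integrableOn, hzero, sub_zero] at h2

end Conclusion

theorem same_eigenvalue_orthogonality (n : ℕ) (hn : 2 ≤ n)
    (φj φk : EuclideanSpace ℝ (Fin n) → ℝ)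
    (hφj : ContDiff ℝ (⊤ : ℕ∞) φj) (hperj : ZPeriodic φj)
    (hφk : ContDiff ℝ (⊤ : ℕ∞) φk) (hperk : ZPeriodic φk)
    (lam : ℝ) (hlam : 0 < lam)
    (heigj : ∀ x, lap φj x = -lam ^ 2 * φj x)
    (heigk : ∀ x, lap φk x = -lam ^ 2 * φk x) :
    ∫ x in {x ∈ Qcube n | φj x = 0}, φk x * ‖gradient φj x‖ ∂μH[(n : ℝ) - 1] = 0 := by
  obtain ⟨m, rfl⟩ : ∃ m, n = m + 1 := ⟨n - 1, by omega⟩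
  have hdim : ((m + 1 : ℕ) : ℝ) - 1 = m := by push_cast; ring
  rw [hdim]
  have hpj : ∀ x k, φj (x + latticeVec k) = φj x := hperj
  have hpk : ∀ x k, φk (x + latticeVec k) = φk x := hperk
  have hmz : MeasurableSet {x | φj x = 0} :=
    (isClosed_eq hφj.continuous continuous_const).measurableSet
  obtain ⟨hint, hval⟩ := nodal_integral_mul hφj (latticeCutoff_contDiff (n := m + 1))
    latticeCutoff_hasCompactSupport latticeCutoff_nonneg (hφk.of_le (by simp) : ContDiff ℝ 1 φk)
  rw [gradFlux_latticeCutoff_eq_zero hφj hφk hpj hpk (fun x => by rw [heigj, heigk]; ring),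
    mul_zero] at hval
  have hμ := measurePreserving_restrict (n := m + 1) (μ := μH[(m : ℝ)])
    (fun k => (IsometryEquiv.addRight (latticeVec k)).measurePreserving_hausdorffMeasure (m : ℝ))
    hmz fun x k => by simp only [mem_ofPred_eq, hpj]
  simp only [mul_assoc] at hint hval
  rw [integral_unfold hμ (f := fun x => φk x * ‖gradient φj x‖) (fun x k => by
      have h1 : gradient φj (x + latticeVec k) = gradient φj x := by
        ext i
        rw [gradient_apply_eq_pd, gradient_apply_eq_pd, pd_periodic hpj]
      rw [hpk, h1]) hint
    (fun x hx => tsupport_latticeCutoff (subset_tsupport _ hx)),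
    Measure.restrict_restrict measurableSet_Qcube] at hval
  refine Eq.trans ?_ hval
  change ∫ x in Qcube (m + 1) ∩ {x | φj x = 0}, φk x * ‖gradient φj x‖ ∂μH[(m : ℝ)] = _
  refine setIntegral_congr_fun (measurableSet_Qcube.inter hmz) fun x hx => ?_
  have hx1 : ∀ i, x i ∈ Ioo (-1 : ℝ) 2 := fun i =>
    ⟨by linarith [(hx.1 i).1], by linarith [(hx.1 i).2]⟩
  simp only [sum_latticeCutoff hx1, one_mul]
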